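/- arXiv:2411.00679 — 4 statements merged into one kernel-verified Lean document; each statement's English description precedes it below -/
import Mathlib

section
/- Fix an integer k ≥ 416. Let G be a finite simple graph, L a 10-assignment for G, and α, β two L-colorings of G. Suppose G contains five distinct vertices v1, v2, v3, v4, w such that w is adjacent to each of v1, v2, v3, v4, the edges v1v2 and v3v4 are present, d_G(w) = 8, and d_G(v1) = d_G(v2) = d_G(v3) = d_G(v4) = 5. Let S = {v1, v2, v3, v4, w}. If there exists a k-good recoloring sequence in G − S from the restriction of α to G − S to the restriction of β to G − S, then there exists a k-good recoloring sequence in G from α to β. -/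
def IsLColoring {V : Type} (G : SimpleGraph V) (L : V → Finset ℕ) (φ : V → ℕ) : Prop :=
  (∀ v, φ v ∈ L v) ∧ ∀ ⦃u w : V⦄, G.Adj u w → φ u ≠ φ w

def recolorCount {V : Type} {m : ℕ} (φ : Fin (m + 1) → V → ℕ) (v : V) : ℕ :=
  (Finset.univ.filter fun i : Fin m => φ i.castSucc v ≠ φ i.succ v).card

def IsRecolSeq {V : Type} (G : SimpleGraph V) (L : V → Finset ℕ) {m : ℕ}
    (φ : Fin (m + 1) → V → ℕ) (α β : V → ℕ) : Prop :=
  φ 0 = α ∧ φ (Fin.last m) = β ∧ (∀ i, IsLColoring G L (φ i)) ∧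
    ∀ i : Fin m, ∃! v : V, φ i.castSucc v ≠ φ i.succ v


section aux
variable {V : Type} [DecidableEq V]

/-- Apply a list of moves. -/
def rrun (φ : V → ℕ) (l : List (V × ℕ)) : V → ℕ :=
  l.foldl (fun ψ p => Function.update ψ p.1 p.2) φ

/-- Number of moves at `v`. -/
def rcnt (l : List (V × ℕ)) (v : V) : ℕ := l.countP (fun p => decide (p.1 = v))

/-- Proper on `A`. -/
def POn (G : SimpleGraph V) (L : V → Finset ℕ) (A : Finset V) (φ : V → ℕ) : Prop :=
  (∀ v ∈ A, φ v ∈ L v) ∧ ∀ u ∈ A, ∀ v ∈ A, G.Adj u v → φ u ≠ φ v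

/-- Valid move list on `A`. -/
def RVal (G : SimpleGraph V) (L : V → Finset ℕ) (A : Finset V) : (V → ℕ) → List (V × ℕ) → Prop
  | _, [] => True
  | φ, p :: l => p.1 ∈ A ∧ p.2 ∈ L p.1 ∧ (∀ u ∈ A, G.Adj p.1 u → φ u ≠ p.2) ∧
      RVal G L A (Function.update φ p.1 p.2) l

/-- Colors of upcoming moves in the neighborhood of `v`. -/
def rev (G : SimpleGraph V) [DecidableRel G.Adj] (v : V) (l : List (V × ℕ)) : List ℕ :=
  (l.filter (fun p => decide (G.Adj v p.1))).map Prod.snd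

variable {G : SimpleGraph V} {L : V → Finset ℕ}

@[simp] lemma rrun_nil (φ : V → ℕ) : rrun φ [] = φ := rfl
@[simp] lemma rrun_cons (φ : V → ℕ) (p : V × ℕ) (l) :
    rrun φ (p :: l) = rrun (Function.update φ p.1 p.2) l := rfl
lemma rrun_append (φ : V → ℕ) (l₁ l₂) : rrun φ (l₁ ++ l₂) = rrun (rrun φ l₁) l₂ := by
  simp [rrun, List.foldl_append]
@[simp] lemma rcnt_nil (v : V) : rcnt [] v = 0 := rfl
lemma rcnt_cons (p : V × ℕ) (l) (v : V) :
    rcnt (p :: l) v = rcnt l v + if p.1 = v then 1 else 0 := by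
  simp [rcnt, List.countP_cons]
lemma rcnt_append (l₁ l₂) (v : V) : rcnt (l₁ ++ l₂) v = rcnt l₁ v + rcnt l₂ v := by
  simp [rcnt]

lemma RVal_append {A : Finset V} {φ : V → ℕ} {l₁ l₂ : List (V × ℕ)} :
    RVal G L A φ (l₁ ++ l₂) ↔ RVal G L A φ l₁ ∧ RVal G L A (rrun φ l₁) l₂ := by
  induction l₁ generalizing φ with
  | nil => simp [RVal]
  | cons p l ih => simp only [List.cons_append, RVal, ih, rrun_cons, and_assoc]

lemma RVal_congr {A : Finset V} {φ ψ : V → ℕ} {l : List (V × ℕ)} (h : ∀ u ∈ A, φ u = ψ u)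
    (hv : RVal G L A φ l) : RVal G L A ψ l := by
  induction l generalizing φ ψ with
  | nil => trivial
  | cons p l ih =>
    obtain ⟨h1, h2, h3, h4⟩ := hv
    refine ⟨h1, h2, fun u hu hau => h u hu ▸ h3 u hu hau, ih (fun u hu => ?_) h4⟩
    by_cases hup : u = p.1
    · subst hup; simp
    · simp [hup, h u hu]

lemma rrun_congr {φ ψ : V → ℕ} {l : List (V × ℕ)} {u : V} (h : φ u = ψ u) :
    rrun φ l u = rrun ψ l u := by
  induction l generalizing φ ψ with
  | nil => exact h
  | cons p l ih =>
    apply ih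
    by_cases hup : u = p.1
    · subst hup; simp
    · simp [hup, h]

lemma POn_update {A : Finset V} {φ : V → ℕ} (hφ : POn G L A φ) {v : V} {c : ℕ}
    (hc : c ∈ L v) (h : ∀ u ∈ A, G.Adj v u → φ u ≠ c) :
    POn G L A (Function.update φ v c) := by
  refine ⟨fun u hu => ?_, fun a ha b hb hab => ?_⟩
  · by_cases huv : u = v
    · subst huv; simpa using hc
    · simpa [huv] using hφ.1 u hu
  · by_cases hav : a = v
    · subst hav
      have hba : b ≠ a := hab.ne'
      simpa [hba] using (h b hb hab).symm
    · by_cases hbv : b = v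
      · subst hbv
        simpa [hav] using h a ha hab.symm
      · simpa [hav, hbv] using hφ.2 a ha b hb hab

lemma POn_run {A : Finset V} {φ : V → ℕ} {l : List (V × ℕ)} (hφ : POn G L A φ)
    (hv : RVal G L A φ l) : POn G L A (rrun φ l) := by
  induction l generalizing φ with
  | nil => exact hφ
  | cons p l ih =>
    obtain ⟨h1, h2, h3, h4⟩ := hv
    exact ih (POn_update hφ h2 h3) h4

lemma idxOf_ge_of_notMem_take (l : List ℕ) (x n : ℕ) (h : x ∉ l.take n) :
    min n l.length ≤ l.idxOf x := by
  induction l generalizing n with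
  | nil => simp
  | cons a l ih =>
    cases n with
    | zero => simp
    | succ n =>
      simp only [List.take_succ_cons, List.mem_cons, not_or] at h
      rw [List.idxOf_cons_ne _ (Ne.symm h.1)]
      have := ih n h.2
      simp only [List.length_cons]
      omega

lemma ext_lemma [DecidableRel G.Adj] (H I : Finset V) (hHI : Disjoint H I) (s : ℕ)
    (hd : ∀ v ∈ I, ((H ∪ I).filter (fun u => G.Adj v u)).card + s + 2 ≤ (L v).card)
    (l : List (V × ℕ)) : ∀ (n : ℕ) (φ : V → ℕ), POn G L (H ∪ I) φ → RVal G L H φ l →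
      (∀ p ∈ l.head?, (I.filter (fun v => G.Adj v p.1 ∧ φ v = p.2)).card ≤ n) →
      ∃ l', RVal G L (H ∪ I) φ l' ∧ (∀ u ∉ I, rrun φ l' u = rrun φ l u) ∧
        (∀ u ∉ I, rcnt l' u = rcnt l u) ∧
        ∀ v ∈ I, (s + 1) * rcnt l' v + (rev G v l).idxOf (φ v) ≤ (rev G v l).length + s := by
  induction l with
  | nil =>
    intro n φ _ _ _
    exact ⟨[], trivial, fun _ _ => rfl, fun _ _ => rfl, fun v _ => by simp [rev]⟩
  | cons p l ih =>
    intro n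
    induction n with
    | zero =>
      intro φ hφ hv hn
      obtain ⟨h1, h2, h3, h4⟩ := hv
      have hn' := hn p (by simp)
      simp only [nonpos_iff_eq_zero, Finset.card_eq_zero, Finset.filter_eq_empty_iff] at hn'
      have h3' : ∀ u ∈ H ∪ I, G.Adj p.1 u → φ u ≠ p.2 := by
        intro u hu hau
        rcases Finset.mem_union.1 hu with hu | hu
        · exact h3 u hu hau
        · intro he
          exact hn' hu ⟨hau.symm, he⟩
      obtain ⟨l', a1, a2, a3, a4⟩ := ih I.card (Function.update φ p.1 p.2)
        (POn_update hφ h2 h3') h4 (fun q _ => Finset.card_filter_le _ _)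
      have hpI : p.1 ∉ I := Finset.disjoint_left.1 hHI h1
      refine ⟨p :: l', ⟨Finset.mem_union_left _ h1, h2, h3', a1⟩, a2, ?_, ?_⟩
      · intro u hu
        rw [rcnt_cons, rcnt_cons, a3 u hu]
      · intro v hvI
        have hne : v ≠ p.1 := fun h => hpI (h ▸ hvI)
        have := a4 v hvI
        rw [Function.update_of_ne hne] at this
        rw [rcnt_cons, if_neg hne.symm]
        by_cases hadj : G.Adj v p.1
        · have hc : φ v ≠ p.2 := fun h => hn' hvI ⟨hadj, h⟩
          have e : rev G v (p :: l) = p.2 :: rev G v l := by simp [rev, hadj]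
          rw [e, List.idxOf_cons_ne _ (Ne.symm hc), List.length_cons]
          simp only [Nat.add_zero]
          omega
        · have e : rev G v (p :: l) = rev G v l := by simp [rev, hadj]
          rw [e]
          simpa using this
    | succ n ihn =>
      intro φ hφ hv hn
      by_cases hbad : ∃ v ∈ I, G.Adj v p.1 ∧ φ v = p.2
      swap
      · refine ihn φ hφ hv (fun q hq => ?_)
        simp only [List.head?_cons, Option.mem_def, Option.some.injEq] at hq
        subst hq
        rw [Finset.filter_eq_empty_iff.2]
        · simp
        · intro v hvI h
          exact hbad ⟨v, hvI, h⟩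
      obtain ⟨v, hvI, hadj, hvc⟩ := hbad
      obtain ⟨x, hxL, hx⟩ : ∃ x ∈ L v, x ∉ (((H ∪ I).filter (fun u => G.Adj v u)).image φ) ∪
          ((rev G v (p :: l)).take (s + 1)).toFinset := by
        apply Finset.exists_mem_notMem_of_card_lt_card
        have b1 := Finset.card_union_le (((H ∪ I).filter (fun u => G.Adj v u)).image φ)
          ((rev G v (p :: l)).take (s + 1)).toFinset
        have b2 := Finset.card_image_le (s := (H ∪ I).filter (fun u => G.Adj v u)) (f := φ)
        have b3 := List.toFinset_card_le ((rev G v (p :: l)).take (s + 1))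
        have b4 := List.length_take_le (s + 1) (rev G v (p :: l))
        have := hd v hvI
        omega
      simp only [Finset.mem_union, not_or, List.mem_toFinset] at hx
      obtain ⟨hx1, hx2⟩ := hx
      have hx1' : ∀ u ∈ H ∪ I, G.Adj v u → φ u ≠ x := by
        intro u hu hau he
        exact hx1 (Finset.mem_image.2 ⟨u, Finset.mem_filter.2 ⟨hu, hau⟩, he⟩)
      have e : rev G v (p :: l) = p.2 :: rev G v l := by simp [rev, hadj]
      have hxp : x ≠ p.2 := by
        intro h; apply hx2; rw [e, h]; simp
      have hvH : v ∉ H := Finset.disjoint_right.1 hHI hvI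
      obtain ⟨l', a1, a2, a3, a4⟩ := ihn (Function.update φ v x) (POn_update hφ hxL hx1')
        (RVal_congr (fun u hu => by
          have : u ≠ v := fun h => hvH (h ▸ hu)
          simp [this]) hv) (by
        intro q hq
        have hn' := hn q hq
        simp only [List.head?_cons, Option.mem_def, Option.some.injEq] at hq
        subst hq
        have hlt : (I.filter (fun u => G.Adj u p.1 ∧ Function.update φ v x u = p.2)).card <
            (I.filter (fun u => G.Adj u p.1 ∧ φ u = p.2)).card := by
          apply Finset.card_lt_card
          rw [Finset.ssubset_iff_of_subset]
          · refine ⟨v, by simp [hvI, hadj, hvc], by simp [hxp]⟩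
          · intro u hu
            simp only [Finset.mem_filter] at hu ⊢
            obtain ⟨c1, c2, c3⟩ := hu
            by_cases huv : u = v
            · subst huv; exact ⟨c1, hadj, hvc⟩
            · rw [Function.update_of_ne huv] at c3
              exact ⟨c1, c2, c3⟩
        omega)
      refine ⟨(v, x) :: l', ⟨Finset.mem_union_right _ hvI, hxL, hx1', a1⟩, ?_, ?_, ?_⟩
      · intro u hu
        have huv : u ≠ v := fun h => hu (h ▸ hvI)
        rw [rrun_cons, a2 u hu]
        exact rrun_congr (by simp [huv])
      · intro u hu
        have huv : v ≠ u := fun h => hu (h ▸ hvI)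
        rw [rcnt_cons, a3 u hu]; simp [huv]
      · intro u hu
        have := a4 u hu
        rw [rcnt_cons]
        by_cases huv : u = v
        · subst huv
          simp only [Function.update_self] at this
          have hm := idxOf_ge_of_notMem_take _ _ _ hx2
          have h0 : (rev G u (p :: l)).idxOf (φ u) = 0 := by
            rw [e, hvc]; simp
          have hlen : 1 ≤ (rev G u (p :: l)).length := by rw [e]; simp
          rw [h0]
          simp only [if_true]
          by_cases hl : s + 1 ≤ (rev G u (p :: l)).length
          · rw [min_eq_left hl] at hm
            rw [Nat.mul_add]; omega
          · rw [min_eq_right (by omega)] at hm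
            have hz : rcnt l' u = 0 := by
              by_contra hne
              have : (s + 1) * 1 ≤ (s + 1) * rcnt l' u :=
                Nat.mul_le_mul_left _ (Nat.one_le_iff_ne_zero.2 hne)
              omega
            rw [hz]; omega
        · rw [Function.update_of_ne huv] at this
          rw [if_neg (fun h => huv h.symm)]
          simpa using this

lemma rev_len_le [DecidableRel G.Adj] (H : Finset V) (v : V) (l : List (V × ℕ)) (φ : V → ℕ)
    (hv : RVal G L H φ l) :
    (rev G v l).length ≤ ∑ u ∈ H.filter (fun u => G.Adj v u), rcnt l u := by
  induction l generalizing φ with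
  | nil => simp [rev]
  | cons p l ih =>
    obtain ⟨h1, h2, h3, h4⟩ := hv
    have := ih _ h4
    simp only [rcnt_cons, Finset.sum_add_distrib, Finset.sum_ite_eq, Finset.mem_filter, h1,
      true_and]
    by_cases hadj : G.Adj v p.1
    · have e : rev G v (p :: l) = p.2 :: rev G v l := by simp [rev, hadj]
      rw [e, if_pos hadj]; simpa using this
    · have e : rev G v (p :: l) = rev G v l := by simp [rev, hadj]
      rw [e, if_neg hadj]; simpa using this

lemma phase1 [DecidableRel G.Adj] (H I : Finset V) (β φ : V → ℕ) (hφ : POn G L (H ∪ I) φ)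
    (hd : ∀ v ∈ I, ((H ∪ I).filter (fun u => G.Adj v u)).card + I.card < (L v).card)
    (T : Finset V) : T ⊆ I → ∃ l, RVal G L (H ∪ I) φ l ∧ (∀ u ∉ T, rrun φ l u = φ u) ∧
      (∀ u, rcnt l u ≤ if u ∈ T then 1 else 0) ∧
      ∀ v ∈ T, ∀ u ∈ I, G.Adj v u → rrun φ l v ≠ β u := by
  induction T using Finset.induction_on with
  | empty => intro _; exact ⟨[], trivial, fun _ _ => rfl, fun _ => by simp, by simp⟩
  | insert a T haT ih =>
    intro hT
    obtain ⟨haI, hTI⟩ := Finset.insert_subset_iff.1 hT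
    obtain ⟨l, a1, a2, a3, a4⟩ := ih hTI
    obtain ⟨x, hxL, hx⟩ : ∃ x ∈ L a,
        x ∉ (((H ∪ I).filter (fun u => G.Adj a u)).image (rrun φ l)) ∪ I.image β := by
      apply Finset.exists_mem_notMem_of_card_lt_card
      have b1 := Finset.card_union_le
        (((H ∪ I).filter (fun u => G.Adj a u)).image (rrun φ l)) (I.image β)
      have b2 := Finset.card_image_le (s := (H ∪ I).filter (fun u => G.Adj a u)) (f := rrun φ l)
      have b3 := Finset.card_image_le (s := I) (f := β)
      have := hd a haI
      omega
    simp only [Finset.mem_union, not_or, Finset.mem_image, Finset.mem_filter] at hx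
    obtain ⟨hx1, hx2⟩ := hx
    refine ⟨l ++ [(a, x)], ?_, ?_, ?_, ?_⟩
    · rw [RVal_append]
      exact ⟨a1, Finset.mem_union_right _ haI, hxL,
        fun u hu hau he => hx1 ⟨u, ⟨Finset.mem_union.1 hu, hau⟩, he⟩, trivial⟩
    · intro u hu
      simp only [Finset.mem_insert, not_or] at hu
      rw [rrun_append]
      simp [hu.1, a2 u hu.2]
    · intro u
      have := a3 u
      rw [rcnt_append, rcnt_cons]
      by_cases h : u = a
      · subst h; simp [haT] at this ⊢; exact this
      · have h' : a ≠ u := fun e => h e.symm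
        simpa [h, h'] using this
    · intro v hv u hu hvu
      rw [rrun_append]
      by_cases h : v = a
      · subst h
        simp only [rrun_cons, rrun_nil, Function.update_self]
        exact fun e => hx2 ⟨u, hu, e.symm⟩
      · have hvT : v ∈ T := (Finset.mem_insert.1 hv).resolve_left h
        simpa [h] using a4 v hvT u hu hvu

lemma phase2 (H I : Finset V) (hHI : Disjoint H I) (β φ : V → ℕ) (hβ : POn G L (H ∪ I) β)
    (hH : ∀ u ∈ H, φ u = β u)
    (hI : ∀ v ∈ I, ∀ u ∈ I, G.Adj v u → φ v ≠ β u)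
    (T : Finset V) : T ⊆ I → ∃ l, RVal G L (H ∪ I) φ l ∧ (∀ u ∉ T, rrun φ l u = φ u) ∧
      (∀ u, rcnt l u ≤ if u ∈ T then 1 else 0) ∧
      ∀ v ∈ T, rrun φ l v = β v := by
  induction T using Finset.induction_on with
  | empty => intro _; exact ⟨[], trivial, fun _ _ => rfl, fun _ => by simp, by simp⟩
  | insert a T haT ih =>
    intro hT
    obtain ⟨haI, hTI⟩ := Finset.insert_subset_iff.1 hT
    obtain ⟨l, a1, a2, a3, a4⟩ := ih hTI
    refine ⟨l ++ [(a, β a)], ?_, ?_, ?_, ?_⟩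
    · rw [RVal_append]
      refine ⟨a1, Finset.mem_union_right _ haI, hβ.1 a (Finset.mem_union_right _ haI), ?_, trivial⟩
      intro u hu hau
      have hβu := (hβ.2 a (Finset.mem_union_right _ haI) u hu hau).symm
      change G.Adj a u at hau
      by_cases huT : u ∈ T
      · rw [a4 u huT]; exact hβu
      · rw [a2 u huT]
        rcases Finset.mem_union.1 hu with h | h
        · rw [hH u h]; exact hβu
        · exact hI u h a haI hau.symm
    · intro u hu
      simp only [Finset.mem_insert, not_or] at hu
      rw [rrun_append]
      simp [hu.1, a2 u hu.2]
    · intro u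
      have := a3 u
      rw [rcnt_append, rcnt_cons]
      by_cases h : u = a
      · subst h; simp [haT] at this ⊢; exact this
      · have h' : a ≠ u := fun e => h e.symm
        simpa [h, h'] using this
    · intro v hv
      rw [rrun_append]
      by_cases h : v = a
      · subst h; simp
      · have hvT : v ∈ T := (Finset.mem_insert.1 hv).resolve_left h
        simpa [h] using a4 v hvT

lemma main_ext [DecidableRel G.Adj] (H I : Finset V) (hHI : Disjoint H I) (s : ℕ)
    (hd : ∀ v ∈ I, ((H ∪ I).filter (fun u => G.Adj v u)).card + s + 2 ≤ (L v).card)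
    (hd' : ∀ v ∈ I, ((H ∪ I).filter (fun u => G.Adj v u)).card + I.card < (L v).card)
    (α β : V → ℕ) (hα : POn G L (H ∪ I) α) (hβ : POn G L (H ∪ I) β)
    (l : List (V × ℕ)) (hl : RVal G L H α l) (hrun : ∀ u ∈ H, rrun α l u = β u) :
    ∃ l', RVal G L (H ∪ I) α l' ∧ (∀ u ∈ H ∪ I, rrun α l' u = β u) ∧
      (∀ u ∉ I, rcnt l' u = rcnt l u) ∧
      ∀ v ∈ I, (s + 1) * rcnt l' v ≤
        ∑ u ∈ H.filter (fun u => G.Adj v u), rcnt l u + s + 2 * (s + 1) := by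
  obtain ⟨l1, a1, a2, a3, a4⟩ := ext_lemma H I hHI s hd l I.card α hα hl
    (fun q _ => Finset.card_filter_le _ _)
  have hP1 := POn_run hα a1
  obtain ⟨l2, b1, b2, b3, b4⟩ := phase1 H I β (rrun α l1) hP1 hd' I subset_rfl
  obtain ⟨l3, c1, c2, c3, c4⟩ := phase2 H I hHI β (rrun (rrun α l1) l2) hβ
    (fun u hu => by
      have huI : u ∉ I := Finset.disjoint_left.1 hHI hu
      rw [b2 u huI, a2 u huI, hrun u hu]) b4 I subset_rfl
  refine ⟨l1 ++ (l2 ++ l3), ?_, ?_, ?_, ?_⟩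
  · rw [RVal_append, RVal_append]; exact ⟨a1, b1, c1⟩
  · intro u hu
    rw [rrun_append, rrun_append]
    by_cases huI : u ∈ I
    · exact c4 u huI
    · have huH : u ∈ H := (Finset.mem_union.1 hu).resolve_right huI
      rw [c2 u huI, b2 u huI, a2 u huI, hrun u huH]
  · intro u hu
    have h2 := b3 u
    have h3 := c3 u
    rw [if_neg hu] at h2 h3
    rw [rcnt_append, rcnt_append, a3 u hu]; omega
  · intro v hv
    have h1 := a4 v hv
    have h2 := b3 v
    have h3 := c3 v
    rw [if_pos hv] at h2 h3
    have h4 := rev_len_le H v l α hl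
    have h5 : (s + 1) * (rcnt l2 v + rcnt l3 v) ≤ (s + 1) * 2 :=
      Nat.mul_le_mul_left _ (by omega)
    rw [rcnt_append, rcnt_append, Nat.mul_add]
    omega

/-- From ℕ-indexed sequences to move lists. -/
lemma seq_to_list (A : Finset V) (f : ℕ → V → ℕ) (m : ℕ)
    (hf : ∀ i ≤ m, POn G L A (f i))
    (hs : ∀ i < m, ∃ v ∈ A, ∀ u, f i u ≠ f (i + 1) u ↔ u = v) :
    ∀ n ≤ m, ∃ l, RVal G L A (f 0) l ∧ rrun (f 0) l = f n ∧
      ∀ u, rcnt l u = ((Finset.range n).filter (fun i => f i u ≠ f (i + 1) u)).card := by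
  intro n
  induction n with
  | zero => intro _; exact ⟨[], trivial, rfl, by simp⟩
  | succ n ih =>
    intro hn
    obtain ⟨l, a1, a2, a3⟩ := ih (by omega)
    obtain ⟨v, hvA, hv⟩ := hs n (by omega)
    have hupd : Function.update (f n) v (f (n + 1) v) = f (n + 1) := by
      funext u
      by_cases h : u = v
      · subst h; simp
      · rw [Function.update_of_ne h]
        by_contra hne
        exact h ((hv u).1 hne)
    refine ⟨l ++ [(v, f (n + 1) v)], ?_, ?_, ?_⟩
    · rw [RVal_append, a2]
      have hP := hf (n + 1) hn
      refine ⟨a1, hvA, hP.1 v hvA, ?_, trivial⟩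
      intro u hu hau
      have hau' : G.Adj v u := hau
      have : f n u = f (n + 1) u := by
        by_contra hne
        exact hau'.ne' ((hv u).1 hne)
      rw [this]
      exact (hP.2 v hvA u hu hau').symm
    · rw [rrun_append, a2]; simpa using hupd
    · intro u
      rw [rcnt_append, a3, rcnt_cons, Finset.range_add_one, Finset.filter_insert]
      by_cases h : u = v
      · subst h
        rw [if_pos ((hv u).2 rfl)]
        simp
      · rw [if_neg (fun e => h ((hv u).1 e))]
        have h' : v ≠ u := fun e => h e.symm
        simp [h']

/-- From move lists to sequences. -/
lemma list_to_seq [Fintype V] (l : List (V × ℕ)) : ∀ (α : V → ℕ), IsLColoring G L α →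
    RVal G L Finset.univ α l → ∃ (M : ℕ) (ψ : Fin (M + 1) → V → ℕ),
      IsRecolSeq G L ψ α (rrun α l) ∧ ∀ u, recolorCount ψ u ≤ rcnt l u := by
  induction l with
  | nil =>
    intro α hα _
    exact ⟨0, fun _ => α, ⟨rfl, rfl, fun _ => hα, fun i => i.elim0⟩,
      fun u => by simp [recolorCount]⟩
  | cons p l ih =>
    intro α hα hv
    obtain ⟨h1, h2, h3, h4⟩ := hv
    have hP : POn G L Finset.univ (Function.update α p.1 p.2) :=
      POn_update ⟨fun v _ => hα.1 v, fun u _ v _ h => hα.2 h⟩ h2 h3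
    obtain ⟨M, ψ, ⟨g1, g2, g3, g4⟩, g5⟩ := ih _
      ⟨fun v => hP.1 v (by simp), fun u v h => hP.2 u (by simp) v (by simp) h⟩ h4
    by_cases hc : p.2 = α p.1
    · have hu : Function.update α p.1 p.2 = α := by rw [hc]; simp
      refine ⟨M, ψ, ⟨g1.trans hu, g2, g3, g4⟩, fun u => ?_⟩
      rw [rcnt_cons]
      exact (g5 u).trans (Nat.le_add_right _ _)
    · refine ⟨M + 1, Fin.cons α ψ, ⟨rfl, ?_, ?_, ?_⟩, ?_⟩
      · rw [← Fin.succ_last, Fin.cons_succ, g2, rrun_cons]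
      · intro i
        refine Fin.cases ?_ (fun j => ?_) i
        · exact hα
        · rw [Fin.cons_succ]; exact g3 j
      · intro i
        refine Fin.cases ?_ (fun j => ?_) i
        · rw [Fin.castSucc_zero, Fin.cons_zero, Fin.cons_succ, g1]
          refine ⟨p.1, by simpa using Ne.symm hc, ?_⟩
          intro u hu
          by_contra hne
          simp [hne] at hu
        · rw [← Fin.succ_castSucc, Fin.cons_succ, Fin.cons_succ]
          exact g4 j
      · intro u
        have := g5 u
        unfold recolorCount at this ⊢
        rw [Finset.card_filter] at this ⊢
        rw [Fin.sum_univ_succ, rcnt_cons]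
        simp only [← Fin.succ_castSucc, Fin.cons_succ, Fin.castSucc_zero, Fin.cons_zero, g1]
        have hle : (if α u ≠ Function.update α p.1 p.2 u then 1 else 0) ≤
            if p.1 = u then 1 else 0 := by
          by_cases h : u = p.1
          · subst h; simp; split_ifs <;> simp
          · have h' : p.1 ≠ u := fun e => h e.symm
            simp [h, h']
        omega

end aux

/-- an 8-vertex with two pairs of adjacent 5-neighbors: if `G` contains this configuration and `G − S` has a
`k`-good recoloring sequence between the restrictions of `α` and `β` (`k ≥ 416`),
then `G` has a `k`-good recoloring sequence from `α` to `β`. -/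
theorem stmt_12 {V : Type} [Fintype V] [DecidableEq V]
    (G : SimpleGraph V) [DecidableRel G.Adj]
    (k : ℕ) (hk : 416 ≤ k)
    (L : V → Finset ℕ) (hL : ∀ u, (L u).card = 10)
    (α β : V → ℕ) (hα : IsLColoring G L α) (hβ : IsLColoring G L β)
    (v1 v2 v3 v4 w : V) (hnodup : ([v1, v2, v3, v4, w] : List V).Nodup)
    (he1: G.Adj w v1)
    (he2: G.Adj w v2)
    (he3: G.Adj w v3)
    (he4: G.Adj w v4)
    (he5: G.Adj v1 v2)
    (he6: G.Adj v3 v4)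
    (hdv1 : G.degree v1 = 5)
    (hdv2 : G.degree v2 = 5)
    (hdv3 : G.degree v3 = 5)
    (hdv4 : G.degree v4 = 5)
    (hdw : G.degree w = 8)
    (S : Set V) (hS : S = {v1, v2, v3, v4, w})
    (hrec : ∃ (m : ℕ) (φ : Fin (m + 1) → ↥(Sᶜ) → ℕ),
      IsRecolSeq (G.induce Sᶜ) (fun u => L u.1) φ (fun u => α u.1) (fun u => β u.1) ∧
      ∀ u : ↥(Sᶜ), recolorCount φ u ≤ k) :
    ∃ (M : ℕ) (ψ : Fin (M + 1) → V → ℕ),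
      IsRecolSeq G L ψ α β ∧ ∀ u : V, recolorCount ψ u ≤ k := by
  classical
  simp only [List.nodup_cons, List.mem_cons, List.not_mem_nil, or_false, not_or] at hnodup
  obtain ⟨⟨n12, n13, n14, n1w⟩, ⟨n23, n24, n2w⟩, ⟨n34, n3w⟩, n4w, -⟩ := hnodup
  obtain ⟨m, φ, ⟨p1, p2, p3, p4⟩, p5⟩ := hrec
  set I : Finset V := {v1, v2, v3, v4} with hI
  set H : Finset V := Finset.univ \ {v1, v2, v3, v4, w} with hH
  have hmem : ∀ u, u ∈ H ↔ u ∈ Sᶜ := by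
    intro u; simp [hH, hS]
  -- step 1: convert to a list
  let f : ℕ → V → ℕ := fun n u =>
    if h : u ∈ Sᶜ then φ ⟨min n m, by omega⟩ ⟨u, h⟩ else α u
  have hf0 : f 0 = α := by
    funext u
    by_cases h : u ∈ Sᶜ
    · have : f 0 u = φ ⟨min 0 m, by omega⟩ ⟨u, h⟩ := dif_pos h
      rw [this]
      have e : (⟨min 0 m, by omega⟩ : Fin (m + 1)) = 0 := by ext; simp
      rw [e, p1]
    · exact dif_neg h
  have hfi : ∀ (i : Fin (m + 1)) (u : V) (h : u ∈ Sᶜ), f i u = φ i ⟨u, h⟩ := by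
    intro i u h
    have : f i u = φ ⟨min i m, by omega⟩ ⟨u, h⟩ := dif_pos h
    rw [this]
    congr 1
    have e : (⟨min i m, by omega⟩ : Fin (m + 1)) = i := by ext; simp; omega
    rw [e]
  have hfn : ∀ (i : ℕ) (u : V) (h : u ∉ Sᶜ), f i u = α u := fun i u h => dif_neg h
  have hseq := seq_to_list (G := G) (L := L) H f m (by
    intro i hi
    have hc := p3 ⟨i, by omega⟩
    refine ⟨fun v hv => ?_, fun u hu v hv huv => ?_⟩
    · rw [hfi ⟨i, by omega⟩ v ((hmem v).1 hv)]
      exact hc.1 ⟨v, (hmem v).1 hv⟩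
    · rw [hfi ⟨i, by omega⟩ v ((hmem v).1 hv), hfi ⟨i, by omega⟩ u ((hmem u).1 hu)]
      exact hc.2 (u := ⟨u, (hmem u).1 hu⟩) (w := ⟨v, (hmem v).1 hv⟩) (by simpa using huv)) (by
    intro i hi
    obtain ⟨v, hv, hv'⟩ := p4 ⟨i, hi⟩
    refine ⟨v.1, (hmem _).2 v.2, fun u => ⟨fun h => ?_, fun h => ?_⟩⟩
    · by_cases hu : u ∈ Sᶜ
      · have e1 := hfi (Fin.castSucc ⟨i, hi⟩) u hu
        have e2 := hfi (Fin.succ ⟨i, hi⟩) u hu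
        simp only [Fin.val_castSucc, Fin.val_succ] at e1 e2
        rw [e1, e2] at h
        have := hv' ⟨u, hu⟩ h
        rw [← this]
      · rw [hfn _ _ hu, hfn _ _ hu] at h
        exact absurd rfl h
    · subst h
      have e1 := hfi (Fin.castSucc ⟨i, hi⟩) v.1 v.2
      have e2 := hfi (Fin.succ ⟨i, hi⟩) v.1 v.2
      simp only [Fin.val_castSucc, Fin.val_succ] at e1 e2
      rw [e1, e2]
      exact hv) m le_rfl
  obtain ⟨l, a1, a2, a3⟩ := hseq
  rw [hf0] at a1 a2
  have a2' : ∀ u ∈ H, rrun α l u = β u := by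
    intro u hu
    have := hfi (Fin.last m) u ((hmem u).1 hu)
    rw [Fin.val_last] at this
    rw [a2, this, p2]
  have hlk : ∀ u ∈ H, rcnt l u ≤ k := by
    intro u hu
    have hu' := (hmem u).1 hu
    refine le_trans (le_of_eq ?_) (p5 ⟨u, hu'⟩)
    rw [a3, recolorCount, Finset.card_filter, Finset.card_filter, Finset.sum_range]
    refine Finset.sum_congr rfl (fun i _ => ?_)
    have e1 := hfi (Fin.castSucc i) u hu'
    have e2 := hfi (Fin.succ i) u hu'
    simp only [Fin.val_castSucc, Fin.val_succ] at e1 e2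
    rw [e1, e2]
  have hPα : ∀ A : Finset V, POn G L A α := fun A =>
    ⟨fun v _ => hα.1 v, fun u _ v _ h => hα.2 h⟩
  have hPβ : ∀ A : Finset V, POn G L A β := fun A =>
    ⟨fun v _ => hβ.1 v, fun u _ v _ h => hβ.2 h⟩
  -- step 2: add w
  have hIc : I.card = 4 := by
    rw [hI]; simp [n12, n13, n14, n23, n24, n34]
  have hwI : ∀ v ∈ I, G.Adj w v := by
    intro v hv
    simp only [hI, Finset.mem_insert, Finset.mem_singleton] at hv
    rcases hv with rfl | rfl | rfl | rfl <;> assumption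
  have hwN : (G.neighborFinset w \ I).card = 4 := by
    rw [Finset.card_sdiff_of_subset, hIc, SimpleGraph.card_neighborFinset_eq_degree, hdw]
    intro v hv
    simpa using hwI v hv
  have hwd : ((H ∪ {w}).filter (fun u => G.Adj w u)).card ≤ 4 := by
    rw [← hwN]
    apply Finset.card_le_card
    intro u hu
    simp only [Finset.mem_filter, Finset.mem_union, Finset.mem_singleton] at hu
    obtain ⟨hu1, hu2⟩ := hu
    have : u ∈ H := hu1.resolve_right hu2.ne'
    simp only [hH, Finset.mem_sdiff, Finset.mem_insert, Finset.mem_singleton, not_or] at this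
    simp [hI, hu2, this]
  have hwdH : (H.filter (fun u => G.Adj w u)).card ≤ 4 :=
    le_trans (Finset.card_le_card (Finset.filter_subset_filter _ Finset.subset_union_left)) hwd
  obtain ⟨l1, b1, b2, b3, b4⟩ := main_ext (G := G) (L := L) H {w} (by simp [hH]) 4
    (by intro v hv; rw [Finset.mem_singleton] at hv; subst hv; rw [hL]; omega)
    (by intro v hv; rw [Finset.mem_singleton] at hv; subst hv; rw [hL, Finset.card_singleton]
        omega)
    α β (hPα _) (hPβ _) l a1 a2'
  have hw := b4 w (by simp)
  have hsw : ∑ u ∈ H.filter (fun u => G.Adj w u), rcnt l u ≤ 4 * k := by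
    refine le_trans (Finset.sum_le_card_nsmul _ _ k
      (fun u hu => hlk u (Finset.mem_filter.1 hu).1)) ?_
    rw [smul_eq_mul]
    exact Nat.mul_le_mul_right _ hwdH
  have hl1 : ∀ u ∈ H, rcnt l1 u ≤ k := by
    intro u hu
    rw [b3 u (by simp only [hH, Finset.mem_sdiff, Finset.mem_insert, not_or] at hu ⊢; tauto)]
    exact hlk u hu
  -- step 3: add the four 5-vertices
  have hdI : ∀ v ∈ I, G.degree v = 5 := by
    intro v hv
    simp only [hI, Finset.mem_insert, Finset.mem_singleton] at hv
    rcases hv with rfl | rfl | rfl | rfl <;> assumption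
  have hpart : ∀ v ∈ I, ∃ v' ∈ I, G.Adj v v' := by
    intro v hv
    simp only [hI, Finset.mem_insert, Finset.mem_singleton] at hv
    rcases hv with rfl | rfl | rfl | rfl
    · exact ⟨v2, by simp [hI], he5⟩
    · exact ⟨v1, by simp [hI], he5.symm⟩
    · exact ⟨v4, by simp [hI], he6⟩
    · exact ⟨v3, by simp [hI], he6.symm⟩
  have hwnI : w ∉ I := by
    simp [hI, Ne.symm n1w, Ne.symm n2w, Ne.symm n3w, Ne.symm n4w]
  have hHIne : ∀ u ∈ H, u ∉ I ∧ u ≠ w := by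
    intro u hu
    simp only [hH, hI, Finset.mem_sdiff, Finset.mem_insert, Finset.mem_singleton, not_or] at hu ⊢
    tauto
  have huniv : (H ∪ {w}) ∪ I = Finset.univ := by
    ext u
    simp only [hH, hI, Finset.mem_union, Finset.mem_sdiff, Finset.mem_insert,
      Finset.mem_singleton, Finset.mem_univ, true_and, iff_true]
    tauto
  have hdeg : ∀ v ∈ I, (((H ∪ {w}) ∪ I).filter (fun u => G.Adj v u)).card = 5 := by
    intro v hv
    rw [huniv, ← hdI v hv, ← SimpleGraph.card_neighborFinset_eq_degree]
    congr 1
    ext u; simp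
  obtain ⟨l2, c1, c2, c3, c4⟩ := main_ext (G := G) (L := L) (H ∪ {w}) I (by
      rw [Finset.disjoint_left]
      intro u hu
      rcases Finset.mem_union.1 hu with h | h
      · exact (hHIne u h).1
      · rw [Finset.mem_singleton.1 h]; exact hwnI) 3
    (by intro v hv; rw [hdeg v hv, hL])
    (by intro v hv; rw [hdeg v hv, hL, hIc]; norm_num)
    α β (hPα _) (hPβ _) l1 b1 b2
  rw [huniv] at c1 c2
  obtain ⟨M, ψ, hψ, hcount⟩ := list_to_seq l2 α hα c1
  have hrunβ : rrun α l2 = β := funext fun u => c2 u (Finset.mem_univ u)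
  rw [hrunβ] at hψ
  refine ⟨M, ψ, hψ, fun u => (hcount u).trans ?_⟩
  by_cases huI : u ∈ I
  · have h := c4 u huI
    obtain ⟨v', hv'I, hv'⟩ := hpart u huI
    have hcard : (H.filter (fun x => G.Adj u x)).card ≤ 3 := by
      have hsub : H.filter (fun x => G.Adj u x) ⊆ ((G.neighborFinset u).erase w).erase v' := by
        intro x hx
        obtain ⟨hx1, hx2⟩ := Finset.mem_filter.1 hx
        have := hHIne x hx1
        simp only [Finset.mem_erase, SimpleGraph.mem_neighborFinset]
        exact ⟨fun e => this.1 (e ▸ hv'I), this.2, hx2⟩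
      refine (Finset.card_le_card hsub).trans ?_
      rw [Finset.card_erase_of_mem, Finset.card_erase_of_mem,
        SimpleGraph.card_neighborFinset_eq_degree, hdI u huI]
      · simpa using (hwI u huI).symm
      · simp only [Finset.mem_erase, SimpleGraph.mem_neighborFinset]
        exact ⟨fun e => hwnI (e ▸ hv'I), hv'⟩
    have hsum : ∑ x ∈ (H ∪ {w}).filter (fun x => G.Adj u x), rcnt l1 x ≤ 3 * k + rcnt l1 w := by
      have hsub : (H ∪ {w}).filter (fun x => G.Adj u x) ⊆
          H.filter (fun x => G.Adj u x) ∪ {w} := by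
        intro x hx
        simp only [Finset.mem_filter, Finset.mem_union] at hx ⊢
        tauto
      refine (Finset.sum_le_sum_of_subset hsub).trans ?_
      rw [Finset.sum_union, Finset.sum_singleton]
      · apply Nat.add_le_add_right
        refine le_trans (Finset.sum_le_card_nsmul _ _ k
          (fun u hu => hl1 u (Finset.mem_filter.1 hu).1)) ?_
        rw [smul_eq_mul]
        exact Nat.mul_le_mul_right _ hcard
      · rw [Finset.disjoint_singleton_right]
        intro hw'
        exact (hHIne w (Finset.mem_filter.1 hw').1).2 rfl
    omega
  · rw [c3 u huI]
    by_cases huw : u = w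
    · subst huw; omega
    · have : u ∈ (H ∪ {w}) ∪ I := by rw [huniv]; simp
      simp only [Finset.mem_union, Finset.mem_singleton, huw, huI, or_false] at this
      exact hl1 u this
end

section
/- Fix an integer k ≥ 416. Let G be a finite simple graph, L a 10-assignment for G, and α, β two L-colorings of G. Suppose G contains five distinct vertices v1, v2, w1, w2, w3 with edges v1v2, v1w1, v1w2, v2w2, v2w3, w1w2, w2w3, with d_G(v1) = d_G(v2) = 5, d_G(w1) = d_G(w3) = 6, and d_G(w2) = 7. Let S = {v1, v2, w1, w2, w3}. If there exists a k-good recoloring sequence in G − S from the restriction of α to G − S to the restriction of β to G − S, then there exists a k-good recoloring sequence in G from α to β. -/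
namespace RC
set_option linter.unusedSectionVars false
open Function

variable {V : Type} [DecidableEq V]

def OK (G : SimpleGraph V) (L : V → Finset ℕ) (T : Finset V) (φ : V → ℕ) : Prop :=
  (∀ v, v ∉ T → φ v ∈ L v) ∧ ∀ u w, u ∉ T → w ∉ T → G.Adj u w → φ u ≠ φ w

def Valid (G : SimpleGraph V) (L : V → Finset ℕ) (T : Finset V) : (V → ℕ) → List (V × ℕ) → Prop
  | φ, [] => OK G L T φ
  | φ, m :: σ => OK G L T φ ∧ m.1 ∉ T ∧ φ m.1 ≠ m.2 ∧ Valid G L T (update φ m.1 m.2) σ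

def play : (V → ℕ) → List (V × ℕ) → (V → ℕ)
  | φ, [] => φ
  | φ, m :: σ => play (update φ m.1 m.2) σ

def cnt (σ : List (V × ℕ)) (v : V) : ℕ := σ.countP (fun m => m.1 = v)

lemma cnt_nil (v : V) : cnt [] v = 0 := rfl

lemma cnt_cons (m : V × ℕ) (σ : List (V × ℕ)) (v : V) :
    cnt (m :: σ) v = cnt σ v + if m.1 = v then 1 else 0 := by
  simp [cnt, List.countP_cons]

def Ext (G : SimpleGraph V) (L : V → Finset ℕ) (T X : Finset V) (β φ : V → ℕ)
    (σ : List (V × ℕ)) (b : V → ℕ) : Prop :=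
  ∃ τ, Valid G L T φ τ ∧ (∀ u, u ∉ T → play φ τ u = β u) ∧
    (∀ u, u ∉ T → u ∉ X → cnt τ u = cnt σ u) ∧ ∀ x ∈ X, cnt τ x ≤ b x

variable {G : SimpleGraph V} {L : V → Finset ℕ} {T X : Finset V} {β φ : V → ℕ}
  {σ : List (V × ℕ)} {b b' : V → ℕ}

lemma Ext.mono (h : Ext G L T X β φ σ b) (hb : ∀ x ∈ X, b x ≤ b' x) : Ext G L T X β φ σ b' := by
  obtain ⟨τ, h1, h2, h3, h4⟩ := h
  exact ⟨τ, h1, h2, h3, fun x hx => (h4 x hx).trans (hb x hx)⟩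

lemma Ext.nil (h : OK G L T φ) (hβ : ∀ u, u ∉ T → φ u = β u) : Ext G L T X β φ [] b :=
  ⟨[], h, hβ, fun _ _ _ => rfl, fun _ _ => by simp [cnt]⟩

/-- Recolor (or leave) a vertex of `X`. -/
lemma Ext.recolor {x : V} {c : ℕ} (hx : x ∈ X) (hT : x ∉ T) (h : OK G L T φ)
    (hE : Ext G L T X β (update φ x c) σ b) :
    Ext G L T X β φ σ (fun y => b y + if y = x then 1 else 0) := by
  by_cases hc : φ x = c
  · have : update φ x c = φ := by rw [← hc]; exact update_eq_self x φ
    rw [this] at hE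
    exact hE.mono (fun y _ => by simp)
  obtain ⟨τ, h1, h2, h3, h4⟩ := hE
  refine ⟨(x, c) :: τ, ⟨h, hT, hc, h1⟩, h2, ?_, ?_⟩
  · intro u hu hu'
    have : x ≠ u := fun e => hu' (e ▸ hx)
    rw [cnt_cons, h3 u hu hu']
    simp [this]
  · intro y hy
    have := h4 y hy
    rw [cnt_cons]
    by_cases hxy : x = y
    · subst hxy; simpa using this
    · have : ¬ y = x := fun e => hxy e.symm
      simp [hxy, this, h4 y hy]

lemma Ext.step {u : V} {c : ℕ} (h : OK G L T φ) (hT : u ∉ T) (hX : u ∉ X) (hc : φ u ≠ c)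
    (hE : Ext G L T X β (update φ u c) σ b) :
    Ext G L T X β φ ((u, c) :: σ) b := by
  obtain ⟨τ, h1, h2, h3, h4⟩ := hE
  refine ⟨(u, c) :: τ, ⟨h, hT, hc, h1⟩, h2, ?_, ?_⟩
  · intro v hv hv'
    rw [cnt_cons, cnt_cons, h3 v hv hv']
  · intro y hy
    have : u ≠ y := fun e => hX (e ▸ hy)
    rw [cnt_cons]
    simp [this, h4 y hy]

lemma OK.congr {ψ : V → ℕ} (h : OK G L T φ) (he : ∀ u, u ∉ T → φ u = ψ u) : OK G L T ψ := by
  refine ⟨fun v hv => he v hv ▸ h.1 v hv, fun u w hu hw ha => ?_⟩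
  rw [← he u hu, ← he w hw]
  exact h.2 u w hu hw ha

lemma Valid.congr : ∀ {σ : List (V × ℕ)} {φ ψ : V → ℕ}, Valid G L T φ σ →
    (∀ u, u ∉ T → φ u = ψ u) → Valid G L T ψ σ := by
  intro σ
  induction σ with
  | nil => intro φ ψ h he; exact OK.congr h he
  | cons m σ ih =>
    intro φ ψ h he
    obtain ⟨h1, h2, h3, h4⟩ := h
    refine ⟨h1.congr he, h2, he _ h2 ▸ h3, ih h4 ?_⟩
    intro u hu
    by_cases hm : u = m.1
    · subst hm; simp
    · simp [hm, he u hu]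

lemma play_congr : ∀ {σ : List (V × ℕ)} {φ ψ : V → ℕ},
    (∀ u, u ∉ T → φ u = ψ u) → ∀ u, u ∉ T → play φ σ u = play ψ σ u := by
  intro σ
  induction σ with
  | nil => intro φ ψ he u hu; exact he u hu
  | cons m σ ih =>
    intro φ ψ he
    refine ih ?_
    intro u hu
    by_cases hm : u = m.1
    · subst hm; simp
    · simp [hm, he u hu]

lemma Valid.ok (h : Valid G L T φ σ) : OK G L T φ := by
  cases σ with
  | nil => exact h
  | cons m σ => exact h.1

lemma Valid.cnt_zero : ∀ {σ : List (V × ℕ)} {φ : V → ℕ}, Valid G L T φ σ →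
    ∀ u ∈ T, cnt σ u = 0 := by
  intro σ
  induction σ with
  | nil => intros; rfl
  | cons m σ ih =>
    intro φ h u hu
    rw [cnt_cons, ih h.2.2.2 u hu]
    have : m.1 ≠ u := fun e => h.2.1 (e ▸ hu)
    simp [this]

lemma OK.upd {x : V} {c : ℕ} (h : OK G L T φ) (hc : c ∈ L x)
    (hn : ∀ u, u ∉ T → G.Adj x u → φ u ≠ c) : OK G L T (update φ x c) := by
  refine ⟨fun v hv => ?_, fun u w hu hw ha => ?_⟩
  · by_cases hv' : v = x
    · subst hv'; simpa using hc
    · simpa [hv'] using h.1 v hv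
  · by_cases hu' : u = x
    · subst hu'
      have : w ≠ u := fun e => G.loopless.irrefl u (e ▸ ha)
      simpa [this] using (hn w hw ha).symm
    · by_cases hw' : w = x
      · subst hw'
        simpa [hu'] using hn u hu ha.symm
      · simpa [hu', hw'] using h.2 u w hu hw ha

lemma pick {A F : Finset ℕ} (h : F.card < A.card) : ∃ c ∈ A, c ∉ F :=
  Finset.exists_mem_notMem_of_card_lt_card h

section
variable [Fintype V] [DecidableRel G.Adj]

/-- upcoming colors of neighbours -/
def nc (G : SimpleGraph V) [DecidableRel G.Adj] (σ : List (V × ℕ)) (v : V) : List ℕ :=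
  (σ.filter (fun m => G.Adj v m.1)).map Prod.snd

lemma nc_cons_adj {m : V × ℕ} {v : V} (h : G.Adj v m.1) : nc G (m :: σ) v = m.2 :: nc G σ v := by
  simp [nc, h]

lemma nc_cons_not {m : V × ℕ} {v : V} (h : ¬ G.Adj v m.1) : nc G (m :: σ) v = nc G σ v := by
  simp [nc, h]

lemma nc_length (σ : List (V × ℕ)) (v : V) :
    (nc G σ v).length = ∑ u ∈ G.neighborFinset v, cnt σ u := by
  induction σ with
  | nil => simp [nc, cnt]
  | cons m σ ih =>
    simp only [cnt_cons, Finset.sum_add_distrib]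
    rw [← ih]
    by_cases h : G.Adj v m.1
    · simp [nc_cons_adj h, h]
    · simp [nc_cons_not h, h]

lemma card_take (l : List ℕ) (n : ℕ) : (l.take n).toFinset.card ≤ n :=
  (List.toFinset_card_le _).trans (by simp)

lemma mem_take_of_pos {m : V × ℕ} {v : V} (h : G.Adj v m.1) {n : ℕ} (hn : 0 < n) :
    m.2 ∈ (nc G (m :: σ) v).take n := by
  rw [nc_cons_adj h]
  cases n with
  | zero => omega
  | succ n => simp

/-- Final phase: all colors outside `X` are right, and vertices of `X` have small degree. -/
lemma final (hL : ∀ u, (L u).card = 10) (hβ : OK G L T β) (hXT : ∀ x ∈ X, x ∉ T)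
    (hd : ∀ x ∈ X, (G.neighborFinset x \ T).card ≤ 8) :
    ∀ (n : ℕ) (Y : Finset V), Y.card = n → Y ⊆ X → ∀ φ : V → ℕ, OK G L T φ →
      (∀ u, u ∉ T → u ∉ Y → φ u = β u) → Ext G L T X β φ [] (fun _ => n) := by
  intro n
  induction n with
  | zero =>
    intro Y hY _ φ hφ he
    rw [Finset.card_eq_zero] at hY
    subst hY
    exact Ext.nil hφ (fun u hu => he u hu (by simp))
  | succ n ih =>
    intro Y hY hYX
    obtain ⟨y, hy⟩ : Y.Nonempty := by rw [← Finset.card_pos]; omega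
    have inner : ∀ (m : ℕ) (φ : V → ℕ), OK G L T φ → (∀ u, u ∉ T → u ∉ Y → φ u = β u) →
        (Y.filter (fun z => G.Adj y z ∧ φ z = β y)).card = m →
        Ext G L T X β φ [] (fun x => if x ∈ Y.filter (fun z => G.Adj y z ∧ φ z = β y) ∨ x = y
          then n + 1 else n) := by
      intro m
      induction m with
      | zero =>
        intro φ hφ he hc
        rw [Finset.card_eq_zero] at hc
        have hc' : ∀ z ∈ Y, G.Adj y z → φ z ≠ β y := by
          intro z hz ha hzy
          have : z ∈ Y.filter (fun z => G.Adj y z ∧ φ z = β y) := by simp [hz, ha, hzy]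
          rw [hc] at this
          simp at this
        have hyT := hXT y (hYX hy)
        have h1 : OK G L T (update φ y (β y)) := by
          refine hφ.upd (hβ.1 y hyT) ?_
          intro u hu ha
          by_cases huY : u ∈ Y
          · exact hc' u huY ha
          · rw [he u hu huY]; exact (hβ.2 y u hyT hu ha).symm
        have h2 := ih (Y.erase y) (by rw [Finset.card_erase_of_mem hy, hY]; rfl)
          ((Finset.erase_subset _ _).trans hYX) _ h1 (by
            intro u hu huY
            by_cases huy : u = y
            · subst huy; simp
            · simp only [ne_eq, huy, not_false_eq_true, update_of_ne]
              exact he u hu (fun h => huY (Finset.mem_erase.2 ⟨huy, h⟩)))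
        refine (Ext.recolor (hYX hy) hyT hφ h2).mono ?_
        intro x _
        by_cases hxy : x = y <;> simp [hxy]
        split_ifs <;> omega
      | succ m ihm =>
        intro φ hφ he hc
        obtain ⟨z, hz⟩ : (Y.filter (fun z => G.Adj y z ∧ φ z = β y)).Nonempty := by
          rw [← Finset.card_pos]; omega
        have hz' := Finset.mem_filter.1 hz
        obtain ⟨hzY, hza, hzb⟩ := hz'
        have hzX := hYX hzY
        have hzy : z ≠ y := fun e => G.loopless.irrefl y (e ▸ hza)
        obtain ⟨c, hcL, hcF⟩ := pick (A := L z)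
          (F := (G.neighborFinset z \ T).image φ ∪ {β y}) (by
            have h1 := Finset.card_union_le ((G.neighborFinset z \ T).image φ) {β y}
            have h2 := Finset.card_image_le (s := G.neighborFinset z \ T) (f := φ)
            have h3 := hd z hzX
            rw [Finset.card_singleton] at h1
            rw [hL]; omega)
        simp only [Finset.mem_union, Finset.mem_image, Finset.mem_sdiff,
          SimpleGraph.mem_neighborFinset, Finset.mem_singleton, not_or, not_exists, not_and] at hcF
        have h1 : OK G L T (update φ z c) := hφ.upd hcL (fun u hu ha => hcF.1 u ⟨ha, hu⟩)
        have hfil : Y.filter (fun w => G.Adj y w ∧ update φ z c w = β y) =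
            (Y.filter (fun w => G.Adj y w ∧ φ w = β y)).erase z := by
          ext w
          by_cases hwz : w = z
          · subst hwz; simp [hcF.2]
          · simp [hwz]
        have h2 := ihm (update φ z c) h1 (by
            intro u hu huY
            have : u ≠ z := fun e => huY (e ▸ hzY)
            simp [this, he u hu huY]) (by
            rw [hfil, Finset.card_erase_of_mem hz, hc]; rfl)
        rw [hfil] at h2
        refine (Ext.recolor hzX (hXT z hzX) hφ h2).mono ?_
        intro x _
        by_cases hxz : x = z
        · subst hxz; simp only [hz, hzy]; simp
        · by_cases hxy : x = y <;> simp [hxz, hxy, hzy.symm]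
    intro φ hφ he
    refine (inner _ φ hφ he rfl).mono ?_
    intro x _
    split_ifs <;> omega

/-- One plain step of the given sequence when nobody in `X` conflicts. -/
lemma ok_step {u : V} {c : ℕ} (h : OK G L T φ) (hv : Valid G L (T ∪ X) φ ((u, c) :: σ))
    (hn : ∀ x ∈ X, G.Adj x u → φ x ≠ c) : OK G L T (update φ u c) := by
  obtain ⟨h1, h2, h3, h4⟩ := hv
  have h5 := h4.ok
  have huc : c ∈ L u := by simpa using h5.1 u h2
  refine h.upd huc ?_
  intro w hw ha
  by_cases hwX : w ∈ X
  · exact hn w hwX ha.symm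
  · have h6 := h5.2 u w h2 (by simp [hw, hwX]) ha
    have : w ≠ u := fun e => G.loopless.irrefl u (e ▸ ha)
    simpa [this] using h6.symm

/-- taking credit down by one move -/
lemma credit_step {m : V × ℕ} {v : V} {c e : ℕ} (h : c ∉ (nc G (m :: σ) v).take e) :
    ∃ e', c ∉ (nc G σ v).take e' ∧ e' ≤ e ∧
      (nc G σ v).length - e' ≤ (nc G (m :: σ) v).length - e := by
  by_cases ha : G.Adj v m.1
  · rw [nc_cons_adj ha] at *
    cases e with
    | zero => exact ⟨0, by simp, by simp, by simp⟩
    | succ e =>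
      refine ⟨e, ?_, by omega, by simp⟩
      simp only [List.take_succ_cons, List.mem_cons, not_or] at h
      exact h.2
  · rw [nc_cons_not ha] at *
    exact ⟨e, h, le_rfl, le_rfl⟩

lemma credit_zero {m : V × ℕ} {v : V} {e : ℕ} (ha : G.Adj v m.1)
    (h : m.2 ∉ (nc G (m :: σ) v).take e) : e = 0 := by
  by_contra he
  exact h (mem_take_of_pos ha (by omega))

lemma len_pos {m : V × ℕ} {v : V} (ha : G.Adj v m.1) : 0 < (nc G (m :: σ) v).length := by
  rw [nc_cons_adj ha]; simp

/-- Phase 2: extension to `X` where each vertex has at most 5 neighbours. -/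
lemma phase2 (hL : ∀ u, (L u).card = 10) (hβ : OK G L T β) (hXT : ∀ x ∈ X, x ∉ T)
    (hd : ∀ x ∈ X, (G.neighborFinset x \ T).card ≤ 5) :
    ∀ (σ : List (V × ℕ)) (φ : V → ℕ) (e : V → ℕ), OK G L T φ → Valid G L (T ∪ X) φ σ →
      (∀ u, u ∉ T → u ∉ X → play φ σ u = β u) →
      (∀ x ∈ X, φ x ∉ (nc G σ x).take (e x)) →
      Ext G L T X β φ σ (fun x => ((nc G σ x).length - e x + 3) / 4 + X.card) := by
  intro σ
  induction σ with
  | nil =>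
    intro φ e hφ _ hp _
    refine (final hL hβ hXT (fun x hx => (hd x hx).trans (by norm_num)) _ X rfl
      (fun _ h => h) φ hφ hp).mono ?_
    intro x _; simp
  | cons m σ ih =>
    obtain ⟨u, c⟩ := m
    have inner : ∀ (n : ℕ) (φ : V → ℕ) (e : V → ℕ), OK G L T φ →
        Valid G L (T ∪ X) φ ((u, c) :: σ) →
        (∀ v, v ∉ T → v ∉ X → play φ ((u, c) :: σ) v = β v) →
        (∀ x ∈ X, φ x ∉ (nc G ((u, c) :: σ) x).take (e x)) →
        (X.filter (fun x => G.Adj x u ∧ φ x = c)).card = n →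
        Ext G L T X β φ ((u, c) :: σ)
          (fun x => ((nc G ((u, c) :: σ) x).length - e x + 3) / 4 + X.card) := by
      intro n
      induction n with
      | zero =>
        intro φ e hφ hv hp he hc
        rw [Finset.card_eq_zero] at hc
        have hc' : ∀ x ∈ X, G.Adj x u → φ x ≠ c := by
          intro z hz ha hzy
          have : z ∈ X.filter (fun x => G.Adj x u ∧ φ x = c) := by simp [hz, ha, hzy]
          rw [hc] at this
          simp at this
        have h1 := ok_step hφ hv hc'
        obtain ⟨_, h2, h3, h4⟩ := hv
        simp only [Finset.mem_union, not_or] at h2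
        have hch : ∀ x, ∃ e', x ∈ X → φ x ∉ (nc G σ x).take e' ∧
            (nc G σ x).length - e' ≤ (nc G ((u, c) :: σ) x).length - e x := by
          intro x
          by_cases hx : x ∈ X
          · obtain ⟨e', a1, a2, a3⟩ := credit_step (he x hx)
            exact ⟨e', fun _ => ⟨a1, a3⟩⟩
          · exact ⟨0, fun h => absurd h hx⟩
        choose e' he' using hch
        have h5 := ih (update φ u c) e' h1 h4 hp (by
          intro x hx
          have : x ≠ u := fun e => h2.2 (e ▸ hx)
          simpa [this] using (he' x hx).1)
        refine (Ext.step hφ h2.1 h2.2 h3 h5).mono ?_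
        intro x hx
        have := (he' x hx).2
        omega
      | succ n ihn =>
        intro φ e hφ hv hp he hc
        obtain ⟨z, hz⟩ : (X.filter (fun x => G.Adj x u ∧ φ x = c)).Nonempty := by
          rw [← Finset.card_pos]; omega
        obtain ⟨hzX, hza, hzc⟩ := Finset.mem_filter.1 hz
        obtain ⟨d, hdL, hdF⟩ := pick (A := L z)
          (F := (G.neighborFinset z \ T).image φ ∪ ((nc G ((u, c) :: σ) z).take 4).toFinset) (by
            have h1 := Finset.card_union_le ((G.neighborFinset z \ T).image φ)
              ((nc G ((u, c) :: σ) z).take 4).toFinset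
            have h2 := Finset.card_image_le (s := G.neighborFinset z \ T) (f := φ)
            have h3 := hd z hzX
            have h4 := card_take (nc G ((u, c) :: σ) z) 4
            rw [hL]; omega)
        simp only [Finset.mem_union, Finset.mem_image, Finset.mem_sdiff,
          SimpleGraph.mem_neighborFinset, List.mem_toFinset, not_or, not_exists, not_and] at hdF
        have h1 : OK G L T (update φ z d) := hφ.upd hdL (fun u hu ha => hdF.1 u ⟨ha, hu⟩)
        have hdc : d ≠ c := by
          intro e
          rw [e] at hdF
          exact hdF.2 (mem_take_of_pos (m := (u, c)) hza (by norm_num))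
        have hoff : ∀ v, v ∉ T ∪ X → φ v = update φ z d v := by
          intro v hv
          have : v ≠ z := fun e => hv (by simp [e, hzX])
          simp [this]
        have hfil : X.filter (fun x => G.Adj x u ∧ update φ z d x = c) =
            (X.filter (fun x => G.Adj x u ∧ φ x = c)).erase z := by
          ext w
          by_cases hwz : w = z
          · subst hwz; simp [hdc]
          · simp [hwz]
        have h2 := ihn (update φ z d) (update e z 4) h1 (hv.congr hoff) (by
            intro v hvT hvX
            rw [← play_congr hoff v (by simp [hvT, hvX])]
            exact hp v hvT hvX) (by
            intro x hx
            by_cases hxz : x = z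
            · subst hxz; simpa using hdF.2
            · simpa [hxz] using he x hx) (by
            rw [hfil, Finset.card_erase_of_mem hz, hc]; rfl)
        refine (Ext.recolor hzX (hXT z hzX) hφ h2).mono ?_
        intro x hx
        by_cases hxz : x = z
        · subst hxz
          have e0 : e x = 0 := credit_zero (m := (u, c)) hza (hzc ▸ he x hx)
          have := len_pos (σ := σ) (m := (u, c)) hza
          simp only [update_self, e0, if_true]
          omega
        · simp [hxz]
    intro φ e hφ hv hp he
    exact inner _ φ e hφ hv hp he rfl


def ff (t e B : ℕ) : ℕ := max B ((t - e + 3 - B) / 4)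
def gg (t e B : ℕ) : ℕ := (t - e + 3 + 8 * B) / 4

/-- Recolor an outer vertex `w` of the path which is in conflict, possibly moving `w2` first. -/
lemma fixW (hL : ∀ u, (L u).card = 10) {w w2 : V} (hw : w ∈ X) (hw2 : w2 ∈ X) (hadj : G.Adj w w2)
    (hwT : w ∉ T) (hw2T : w2 ∉ T)
    (hd : (G.neighborFinset w \ T).card ≤ 5) (hd2 : (G.neighborFinset w2 \ T).card ≤ 5)
    (m : V × ℕ) (hφ : OK G L T φ) (ha : G.Adj w m.1) (hc : φ w = m.2) {e e2 : ℕ} (B : ℕ)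
    (he : φ w ∉ (nc G (m :: σ) w).take e) (he2 : φ w2 ∉ (nc G (m :: σ) w2).take e2)
    (he24 : e2 ≤ 4) :
    ∃ (φ' : V → ℕ) (e' e2' B' j : ℕ), OK G L T φ' ∧ (∀ v, v ≠ w → v ≠ w2 → φ' v = φ v) ∧
      φ' w ∉ (nc G (m :: σ) w).take e' ∧ φ' w2 ∉ (nc G (m :: σ) w2).take e2' ∧ e2' ≤ 4 ∧
      φ' w ≠ m.2 ∧
      ff (nc G (m :: σ) w).length e' B' + 1 ≤ ff (nc G (m :: σ) w).length e B ∧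
      (∀ C, gg (nc G (m :: σ) w2).length e2' (B' + C) + j ≤
        gg (nc G (m :: σ) w2).length e2 (B + C)) ∧
      ∀ b, Ext G L T X β φ' (m :: σ) b → Ext G L T X β φ (m :: σ)
        (fun x => b x + (if x = w then 1 else 0) + if x = w2 then j else 0) := by
  have e0 : e = 0 := credit_zero ha (hc ▸ he)
  subst e0
  have tpos := len_pos (σ := σ) ha
  have hne : w ≠ w2 := fun e => G.loopless.irrefl w2 (e ▸ hadj)
  rcases Nat.eq_zero_or_pos B with hB | hB
  · subst hB
    obtain ⟨d, hdL, hdF⟩ := pick (A := L w)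
      (F := (G.neighborFinset w \ T).image φ ∪ ((nc G (m :: σ) w).take 4).toFinset) (by
        have h1 := Finset.card_union_le ((G.neighborFinset w \ T).image φ)
          ((nc G (m :: σ) w).take 4).toFinset
        have h2 := Finset.card_image_le (s := G.neighborFinset w \ T) (f := φ)
        have h4 := card_take (nc G (m :: σ) w) 4
        rw [hL]; omega)
    simp only [Finset.mem_union, Finset.mem_image, Finset.mem_sdiff,
      SimpleGraph.mem_neighborFinset, List.mem_toFinset, not_or, not_exists, not_and] at hdF
    refine ⟨update φ w d, 4, e2, 0, 0, hφ.upd hdL (fun u hu ha => hdF.1 u ⟨ha, hu⟩), ?_, ?_, ?_,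
      he24, ?_, ?_, ?_, ?_⟩
    · intro v h1 _; simp [h1]
    · simpa using hdF.2
    · simpa [hne.symm] using he2
    · intro h
      rw [update_self] at h
      rw [h] at hdF
      exact hdF.2 (mem_take_of_pos ha (by norm_num))
    · unfold ff; omega
    · intro C; simp
    · intro b hb
      exact (Ext.recolor hw hwT hφ hb).mono (fun x _ => by simp)
  · obtain ⟨d, hdL, hdF⟩ := pick (A := L w)
      (F := ((G.neighborFinset w \ T).erase w2).image φ ∪
        ((nc G (m :: σ) w).take 5).toFinset) (by
        have h1 := Finset.card_union_le (((G.neighborFinset w \ T).erase w2).image φ)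
          ((nc G (m :: σ) w).take 5).toFinset
        have h2 := Finset.card_image_le (s := (G.neighborFinset w \ T).erase w2) (f := φ)
        have h3 : ((G.neighborFinset w \ T).erase w2).card = (G.neighborFinset w \ T).card - 1 :=
          Finset.card_erase_of_mem (by simp [hadj, hw2T])
        have h4 := card_take (nc G (m :: σ) w) 5
        rw [hL]; omega)
    simp only [Finset.mem_union, Finset.mem_image, Finset.mem_sdiff, Finset.mem_erase,
      SimpleGraph.mem_neighborFinset, List.mem_toFinset, not_or, not_exists, not_and] at hdF
    have hdm : d ≠ m.2 := by
      intro h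
      rw [h] at hdF
      exact hdF.2 (mem_take_of_pos ha (by norm_num))
    by_cases hdw : φ w2 = d
    · obtain ⟨d2, hdL2, hdF2⟩ := pick (A := L w2)
        (F := ((G.neighborFinset w2 \ T).image φ ∪ {d}) ∪
          ((nc G (m :: σ) w2).take 3).toFinset) (by
          have h1 := Finset.card_union_le ((G.neighborFinset w2 \ T).image φ ∪ {d})
            ((nc G (m :: σ) w2).take 3).toFinset
          have h1' := Finset.card_union_le ((G.neighborFinset w2 \ T).image φ) {d}
          rw [Finset.card_singleton] at h1'
          have h2 := Finset.card_image_le (s := G.neighborFinset w2 \ T) (f := φ)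
          have h4 := card_take (nc G (m :: σ) w2) 3
          rw [hL]; omega)
      simp only [Finset.mem_union, Finset.mem_image, Finset.mem_sdiff, Finset.mem_singleton,
        SimpleGraph.mem_neighborFinset, List.mem_toFinset, not_or, not_exists, not_and] at hdF2
      have h1 : OK G L T (update φ w2 d2) :=
        hφ.upd hdL2 (fun u hu ha => hdF2.1.1 u ⟨ha, hu⟩)
      have h2 : OK G L T (update (update φ w2 d2) w d) := by
        refine h1.upd hdL ?_
        intro u hu hau
        by_cases huw : u = w2
        · subst huw; simpa using hdF2.1.2
        · simpa [huw] using hdF.1 u ⟨huw, hau, hu⟩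
      refine ⟨update (update φ w2 d2) w d, 5, 3, B - 1, 1, h2, ?_, ?_, ?_,
        by norm_num, ?_, ?_, ?_, ?_⟩
      · intro v h1 h2; simp [h1, h2]
      · simpa using hdF.2
      · simpa [hne.symm] using hdF2.2
      · simpa using hdm
      · unfold ff; omega
      · intro C; unfold gg; omega
      · intro b hb
        exact (Ext.recolor hw2 hw2T hφ (Ext.recolor hw hwT h1 hb))
    · refine ⟨update φ w d, 5, e2, B - 1, 0, ?_, ?_, ?_, ?_,
        he24, ?_, ?_, ?_, ?_⟩
      · refine hφ.upd hdL (fun u hu hau => ?_)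
        by_cases huw : u = w2
        · subst huw; exact hdw
        · exact hdF.1 u ⟨huw, hau, hu⟩
      · intro v h1 _; simp [h1]
      · simpa using hdF.2
      · simpa [hne.symm] using he2
      · simpa using hdm
      · unfold ff; omega
      · intro C; unfold gg; omega
      · intro b hb
        exact (Ext.recolor hw hwT hφ hb).mono (fun x _ => by simp)

def bd (G : SimpleGraph V) [DecidableRel G.Adj] (w1 w2 w3 : V) (σ : List (V × ℕ))
    (e1 e2 e3 B1 B3 : ℕ) (x : V) : ℕ :=
  if x = w1 then ff (nc G σ w1).length e1 B1 + 3
  else if x = w2 then gg (nc G σ w2).length e2 (B1 + B3) + 3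
  else ff (nc G σ w3).length e3 B3 + 3

lemma phase1 (hL : ∀ u, (L u).card = 10) (hβ : OK G L T β) {w1 w2 w3 : V}
    (h12 : w1 ≠ w2) (h13 : w1 ≠ w3) (h23 : w2 ≠ w3)
    (hT1 : w1 ∉ T) (hT2 : w2 ∉ T) (hT3 : w3 ∉ T)
    (ha12 : G.Adj w1 w2) (ha32 : G.Adj w3 w2)
    (hd1 : (G.neighborFinset w1 \ T).card ≤ 5)
    (hd2 : (G.neighborFinset w2 \ T).card ≤ 5)
    (hd3 : (G.neighborFinset w3 \ T).card ≤ 5) (hX : X = {w1, w2, w3}) :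
    ∀ (σ : List (V × ℕ)) (φ : V → ℕ) (e1 e2 e3 B1 B3 : ℕ), OK G L T φ →
      Valid G L (T ∪ X) φ σ →
      (∀ u, u ∉ T → u ∉ X → play φ σ u = β u) →
      φ w1 ∉ (nc G σ w1).take e1 → φ w2 ∉ (nc G σ w2).take e2 →
      φ w3 ∉ (nc G σ w3).take e3 → e2 ≤ 4 →
      Ext G L T X β φ σ (bd G w1 w2 w3 σ e1 e2 e3 B1 B3) := by
  have hX1 : w1 ∈ X := by simp [hX]
  have hX2 : w2 ∈ X := by simp [hX]
  have hX3 : w3 ∈ X := by simp [hX]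
  have hXall : ∀ x ∈ X, x = w1 ∨ x = w2 ∨ x = w3 := by
    intro x hx; simpa [hX] using hx
  have hXT : ∀ x ∈ X, x ∉ T := by
    intro x hx
    rcases hXall x hx with rfl | rfl | rfl <;> assumption
  intro σ
  induction σ with
  | nil =>
    intro φ e1 e2 e3 B1 B3 hφ _ hp _ _ _ _
    refine (final hL hβ hXT ?_ _ X rfl (fun _ h => h) φ hφ hp).mono ?_
    · intro x hx
      rcases hXall x hx with rfl | rfl | rfl <;> omega
    · intro x _
      have : X.card ≤ 3 := by rw [hX]; exact Finset.card_le_three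
      unfold bd
      split_ifs <;> omega
  | cons m σ ih =>
    -- nobody in conflict
    have st0 : ∀ (φ : V → ℕ) (e1 e2 e3 B1 B3 : ℕ), OK G L T φ →
      Valid G L (T ∪ X) φ (m :: σ) →
      (∀ u, u ∉ T → u ∉ X → play φ (m :: σ) u = β u) →
      φ w1 ∉ (nc G (m :: σ) w1).take e1 → φ w2 ∉ (nc G (m :: σ) w2).take e2 →
      φ w3 ∉ (nc G (m :: σ) w3).take e3 → e2 ≤ 4 →
      (G.Adj w1 m.1 → φ w1 ≠ m.2) → (G.Adj w3 m.1 → φ w3 ≠ m.2) →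
      (G.Adj w2 m.1 → φ w2 ≠ m.2) →
      Ext G L T X β φ (m :: σ) (bd G w1 w2 w3 (m :: σ) e1 e2 e3 B1 B3) := by
      intro φ e1 e2 e3 B1 B3 hφ hv hp c1 c2 c3 h4 n1 n3 n2
      obtain ⟨u, c⟩ := m
      have h1 := ok_step hφ hv (by
        intro x hx
        rcases hXall x hx with rfl | rfl | rfl <;> assumption)
      obtain ⟨_, h2, h3, h5⟩ := hv
      simp only [Finset.mem_union, not_or] at h2
      obtain ⟨e1', a1, b1, d1⟩ := credit_step c1
      obtain ⟨e2', a2, b2, d2⟩ := credit_step c2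
      obtain ⟨e3', a3, b3, d3⟩ := credit_step c3
      have k1 : w1 ≠ u := fun e => h2.2 (e ▸ hX1)
      have k2 : w2 ≠ u := fun e => h2.2 (e ▸ hX2)
      have k3 : w3 ≠ u := fun e => h2.2 (e ▸ hX3)
      have h6 := ih (update φ u c) e1' e2' e3' B1 B3 h1 h5 hp (by simpa [k1] using a1)
        (by simpa [k2] using a2) (by simpa [k3] using a3) (by omega)
      refine (Ext.step hφ h2.1 h2.2 h3 h6).mono ?_
      intro x _
      unfold bd ff gg
      split_ifs <;> omega
    -- only w2 may be in conflict
    have st1 : ∀ (φ : V → ℕ) (e1 e2 e3 B1 B3 : ℕ), OK G L T φ →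
      Valid G L (T ∪ X) φ (m :: σ) →
      (∀ u, u ∉ T → u ∉ X → play φ (m :: σ) u = β u) →
      φ w1 ∉ (nc G (m :: σ) w1).take e1 → φ w2 ∉ (nc G (m :: σ) w2).take e2 →
      φ w3 ∉ (nc G (m :: σ) w3).take e3 → e2 ≤ 4 →
      (G.Adj w1 m.1 → φ w1 ≠ m.2) → (G.Adj w3 m.1 → φ w3 ≠ m.2) →
      Ext G L T X β φ (m :: σ) (bd G w1 w2 w3 (m :: σ) e1 e2 e3 B1 B3) := by
      intro φ e1 e2 e3 B1 B3 hφ hv hp c1 c2 c3 h4 n1 n3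
      by_cases hconf : G.Adj w2 m.1 ∧ φ w2 = m.2
      swap
      · exact st0 φ e1 e2 e3 B1 B3 hφ hv hp c1 c2 c3 h4 n1 n3 (fun a b => hconf ⟨a, b⟩)
      obtain ⟨ha, hc⟩ := hconf
      have e0 : e2 = 0 := credit_zero ha (hc ▸ c2)
      subst e0
      have tpos := len_pos (σ := σ) ha
      obtain ⟨d, hdL, hdF⟩ := pick (A := L w2)
        (F := (G.neighborFinset w2 \ T).image φ ∪ ((nc G (m :: σ) w2).take 4).toFinset) (by
          have h1 := Finset.card_union_le ((G.neighborFinset w2 \ T).image φ)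
            ((nc G (m :: σ) w2).take 4).toFinset
          have h2 := Finset.card_image_le (s := G.neighborFinset w2 \ T) (f := φ)
          have h4 := card_take (nc G (m :: σ) w2) 4
          rw [hL]; omega)
      simp only [Finset.mem_union, Finset.mem_image, Finset.mem_sdiff,
        SimpleGraph.mem_neighborFinset, List.mem_toFinset, not_or, not_exists, not_and] at hdF
      have h1 : OK G L T (update φ w2 d) := hφ.upd hdL (fun u hu ha => hdF.1 u ⟨ha, hu⟩)
      have hoff : ∀ v, v ∉ T ∪ X → φ v = update φ w2 d v := by
        intro v hv
        have : v ≠ w2 := fun e => hv (by simp [e, hX2])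
        simp [this]
      have hdm : d ≠ m.2 := by
        intro h
        rw [h] at hdF
        exact hdF.2 (mem_take_of_pos ha (by norm_num))
      have h6 := st0 (update φ w2 d) e1 4 e3 B1 B3 h1 (hv.congr hoff) (by
            intro v hvT hvX
            rw [← play_congr hoff v (by simp [hvT, hvX])]
            exact hp v hvT hvX)
          (by simpa [h12] using c1) (by simpa using hdF.2) (by simpa [h23.symm] using c3)
          le_rfl (by simpa [h12] using n1) (by simpa [h23.symm] using n3)
          (by simpa using fun _ => hdm)
      refine (Ext.recolor hX2 hT2 hφ h6).mono ?_
      intro x hx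
      rcases hXall x hx with rfl | rfl | rfl
      · simp [bd, h12]
      · simp only [bd, h12.symm, if_true, if_false, gg]
        omega
      · simp [bd, h13.symm, h23.symm]
    have st2 : ∀ (φ : V → ℕ) (e1 e2 e3 B1 B3 : ℕ), OK G L T φ →
      Valid G L (T ∪ X) φ (m :: σ) →
      (∀ u, u ∉ T → u ∉ X → play φ (m :: σ) u = β u) →
      φ w1 ∉ (nc G (m :: σ) w1).take e1 → φ w2 ∉ (nc G (m :: σ) w2).take e2 →
      φ w3 ∉ (nc G (m :: σ) w3).take e3 → e2 ≤ 4 →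
      (G.Adj w1 m.1 → φ w1 ≠ m.2) →
      Ext G L T X β φ (m :: σ) (bd G w1 w2 w3 (m :: σ) e1 e2 e3 B1 B3) := by
      intro φ e1 e2 e3 B1 B3 hφ hv hp c1 c2 c3 h4 n1
      by_cases hconf : G.Adj w3 m.1 ∧ φ w3 = m.2
      swap
      · exact st1 φ e1 e2 e3 B1 B3 hφ hv hp c1 c2 c3 h4 n1 (fun a b => hconf ⟨a, b⟩)
      obtain ⟨φ', e', e2', B', j, p1, p2, p3, p4, p5, p6, p7, p8, p9⟩ :=
        fixW (β := β) hL hX3 hX2 ha32 hT3 hT2 hd3 hd2 m hφ hconf.1 hconf.2 B3 c3 c2 h4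
      have hoff : ∀ v, v ∉ T ∪ X → φ v = φ' v := by
        intro v hv
        exact (p2 v (fun e => hv (by simp [e, hX3])) (fun e => hv (by simp [e, hX2]))).symm
      have q := p2 w1 h13 h12
      have h6 := p9 _ (st1 φ' e1 e2' e' B1 B' p1 (hv.congr hoff) (by
            intro v hvT hvX
            rw [← play_congr hoff v (by simp [hvT, hvX])]
            exact hp v hvT hvX)
          (q ▸ c1) p4 p3 p5 (q ▸ n1) (fun _ => p6))
      refine h6.mono ?_
      intro x hx
      have p8' := p8 B1
      rw [Nat.add_comm B' B1, Nat.add_comm B3 B1] at p8'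
      rcases hXall x hx with rfl | rfl | rfl
      · simp [bd, h12, h13]
      · simp only [bd, h12.symm, h23, if_true, if_false]
        omega
      · simp only [bd, h13.symm, h23.symm, if_true, if_false]
        omega
    intro φ e1 e2 e3 B1 B3 hφ hv hp c1 c2 c3 h4
    by_cases hconf : G.Adj w1 m.1 ∧ φ w1 = m.2
    swap
    · exact st2 φ e1 e2 e3 B1 B3 hφ hv hp c1 c2 c3 h4 (fun a b => hconf ⟨a, b⟩)
    obtain ⟨φ', e', e2', B', j, p1, p2, p3, p4, p5, p6, p7, p8, p9⟩ :=
      fixW (β := β) hL hX1 hX2 ha12 hT1 hT2 hd1 hd2 m hφ hconf.1 hconf.2 B1 c1 c2 h4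
    have hoff : ∀ v, v ∉ T ∪ X → φ v = φ' v := by
      intro v hv
      exact (p2 v (fun e => hv (by simp [e, hX1])) (fun e => hv (by simp [e, hX2]))).symm
    have q := p2 w3 h13.symm h23.symm
    have h6 := p9 _ (st2 φ' e' e2' e3 B' B3 p1 (hv.congr hoff) (by
          intro v hvT hvX
          rw [← play_congr hoff v (by simp [hvT, hvX])]
          exact hp v hvT hvX)
        p3 p4 (q ▸ c3) p5 (fun _ => p6))
    refine h6.mono ?_
    intro x hx
    have p8' := p8 B3
    rcases hXall x hx with rfl | rfl | rfl
    · simp only [bd, h12, if_true, if_false]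
      omega
    · simp only [bd, h12.symm, if_true, if_false]
      omega
    · simp [bd, h13.symm, h23.symm]

end

lemma recolorCount_succ {W : Type} {m : ℕ} (φ : Fin (m + 1 + 1) → W → ℕ) (v : W) :
    recolorCount φ v = (if φ 0 v ≠ φ 1 v then 1 else 0) +
      recolorCount (fun i : Fin (m + 1) => φ i.succ) v := by
  unfold recolorCount
  rw [Finset.card_filter, Finset.card_filter, Fin.sum_univ_succ]
  rfl

lemma conv1 (G : SimpleGraph V) (L : V → Finset ℕ) (S : Set V) (T : Finset V)
    (hST : ∀ u, u ∈ T ↔ u ∈ S) :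
    ∀ (m : ℕ) (φ : Fin (m + 1) → ↥(Sᶜ) → ℕ) (α : V → ℕ), (∀ u : ↥(Sᶜ), φ 0 u = α u.1) →
      (∀ i, IsLColoring (G.induce Sᶜ) (fun u => L u.1) (φ i)) →
      (∀ i : Fin m, ∃! v, φ i.castSucc v ≠ φ i.succ v) →
      ∃ σ, Valid G L T α σ ∧ (∀ u : ↥(Sᶜ), play α σ u.1 = φ (Fin.last m) u) ∧
        ∀ u : ↥(Sᶜ), cnt σ u.1 = recolorCount φ u := by
  have okl : ∀ (ψ : ↥(Sᶜ) → ℕ) (α : V → ℕ), (∀ u : ↥(Sᶜ), ψ u = α u.1) →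
      IsLColoring (G.induce Sᶜ) (fun u => L u.1) ψ → OK G L T α := by
    intro ψ α h0 hc
    refine ⟨fun v hv => ?_, fun u w hu hw ha => ?_⟩
    · have hv' : v ∈ Sᶜ := fun h => hv ((hST v).2 h)
      have := hc.1 ⟨v, hv'⟩
      rwa [h0] at this
    · have hu' : u ∈ Sᶜ := fun h => hu ((hST u).2 h)
      have hw' : w ∈ Sᶜ := fun h => hw ((hST w).2 h)
      have := hc.2 (u := ⟨u, hu'⟩) (w := ⟨w, hw'⟩) (by simpa using ha)
      rwa [h0, h0] at this
  intro m
  induction m with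
  | zero =>
    intro φ α h0 hc _
    refine ⟨[], okl _ _ h0 (hc 0), fun u => (h0 u).symm, fun u => ?_⟩
    simp [cnt, recolorCount]
  | succ m ih =>
    intro φ α h0 hc hs
    obtain ⟨v, hv, huniq⟩ := hs 0
    have hv' : φ 0 v ≠ φ 1 v := hv
    have huniq' : ∀ y, φ 0 y ≠ φ 1 y → y = v := huniq
    have h1 : ∀ u : ↥(Sᶜ), φ 1 u = update α v.1 (φ 1 v) u.1 := by
      intro u
      by_cases huv : u = v
      · subst huv; simp
      · have : u.1 ≠ v.1 := fun e => huv (Subtype.ext e)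
        simp only [ne_eq, this, not_false_eq_true, update_of_ne]
        rw [← h0]
        by_contra hne
        exact huv (huniq' u (fun e => hne e.symm))
    obtain ⟨σ, s1, s2, s3⟩ := ih (fun i => φ i.succ) (update α v.1 (φ 1 v)) h1
      (fun i => hc i.succ) (fun i => hs i.succ)
    refine ⟨(v.1, φ 1 v) :: σ, ⟨okl _ _ h0 (hc 0), fun h => v.2 ((hST _).1 h), ?_, s1⟩, ?_, ?_⟩
    · rw [← h0]; exact hv'
    · intro u; exact s2 u
    · intro u
      rw [cnt_cons, s3, recolorCount_succ, Nat.add_comm]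
      congr 1
      by_cases huv : u = v
      · subst huv; simp [hv']
      · have h3 : v.1 ≠ u.1 := fun e => huv (Subtype.ext e).symm
        have h4 : φ 0 u = φ 1 u := by
          by_contra hne
          exact huv (huniq' u hne)
        simp [h3, h4]

lemma conv2 (G : SimpleGraph V) (L : V → Finset ℕ) :
    ∀ (σ : List (V × ℕ)) (φ : V → ℕ), Valid G L ∅ φ σ →
      ∃ (M : ℕ) (ψ : Fin (M + 1) → V → ℕ), IsRecolSeq G L ψ φ (play φ σ) ∧
        ∀ u, recolorCount ψ u = cnt σ u := by
  have okl : ∀ φ : V → ℕ, OK G L ∅ φ → IsLColoring G L φ := by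
    intro φ h
    exact ⟨fun v => h.1 v (by simp), fun u w ha => h.2 u w (by simp) (by simp) ha⟩
  intro σ
  induction σ with
  | nil =>
    intro φ h
    refine ⟨0, fun _ => φ, ⟨rfl, rfl, fun _ => okl _ h, fun i => i.elim0⟩, fun u => ?_⟩
    simp [cnt, recolorCount]
  | cons m σ ih =>
    intro φ h
    obtain ⟨h1, _, h3, h4⟩ := h
    obtain ⟨M, ψ, ⟨p1, p2, p3, p4⟩, p5⟩ := ih _ h4
    refine ⟨M + 1, Fin.cons φ ψ, ⟨rfl, ?_, ?_, ?_⟩, ?_⟩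
    · rw [← Fin.succ_last, Fin.cons_succ, p2]; rfl
    · intro i
      refine Fin.cases ?_ (fun i => ?_) i
      · exact okl _ h1
      · exact p3 i
    · intro i
      refine Fin.cases ?_ (fun i => ?_) i
      · refine ⟨m.1, ?_, ?_⟩
        · change φ m.1 ≠ ψ 0 m.1
          rw [p1]; simpa using h3
        · intro y hy
          change φ y ≠ ψ 0 y at hy
          rw [p1] at hy
          by_contra hne
          simp [hne] at hy
      · exact p4 i
    · intro u
      rw [recolorCount_succ, cnt_cons, Nat.add_comm]
      congr 1
      · exact p5 u
      · change (if φ u ≠ ψ 0 u then 1 else 0) = _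
        rw [p1]
        by_cases hu : m.1 = u
        · subst hu; simp [h3]
        · have : u ≠ m.1 := fun e => hu e.symm
          simp [hu, this]

lemma len_le [Fintype V] [DecidableRel G.Adj] (σ : List (V × ℕ)) (v : V) (Z : Finset V) (k d : ℕ)
    (hZ : Z ⊆ G.neighborFinset v) (hdeg : G.degree v = d + Z.card)
    (hk : ∀ u, u ∉ Z → cnt σ u ≤ k) :
    (nc G σ v).length ≤ d * k + ∑ u ∈ Z, cnt σ u := by
  rw [nc_length, ← Finset.sum_sdiff hZ]
  have h1 : (G.neighborFinset v \ Z).card = d := by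
    rw [Finset.card_sdiff_of_subset hZ, G.card_neighborFinset_eq_degree]; omega
  have h2 : ∑ u ∈ G.neighborFinset v \ Z, cnt σ u ≤ (G.neighborFinset v \ Z).card • k :=
    Finset.sum_le_card_nsmul _ _ _ (fun x hx => hk x (Finset.mem_sdiff.1 hx).2)
  rw [h1, smul_eq_mul] at h2
  omega

end RC

/-- configuration RC of Fig. more-reduc (c): if `G` contains this configuration and `G − S` has a
`k`-good recoloring sequence between the restrictions of `α` and `β` (`k ≥ 416`),
then `G` has a `k`-good recoloring sequence from `α` to `β`. -/
theorem stmt_13 {V : Type} [Fintype V] [DecidableEq V]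
    (G : SimpleGraph V) [DecidableRel G.Adj]
    (k : ℕ) (hk : 416 ≤ k)
    (L : V → Finset ℕ) (hL : ∀ u, (L u).card = 10)
    (α β : V → ℕ) (hα : IsLColoring G L α) (hβ : IsLColoring G L β)
    (v1 v2 w1 w2 w3 : V) (hnodup : ([v1, v2, w1, w2, w3] : List V).Nodup)
    (he1: G.Adj v1 v2)
    (he2: G.Adj v1 w1)
    (he3: G.Adj v1 w2)
    (he4: G.Adj v2 w2)
    (he5: G.Adj v2 w3)
    (he6: G.Adj w1 w2)
    (he7: G.Adj w2 w3)
    (hdv1 : G.degree v1 = 5)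
    (hdv2 : G.degree v2 = 5)
    (hdw1 : G.degree w1 = 6)
    (hdw2 : G.degree w2 = 7)
    (hdw3 : G.degree w3 = 6)
    (S : Set V) (hS : S = {v1, v2, w1, w2, w3})
    (hrec : ∃ (m : ℕ) (φ : Fin (m + 1) → ↥(Sᶜ) → ℕ),
      IsRecolSeq (G.induce Sᶜ) (fun u => L u.1) φ (fun u => α u.1) (fun u => β u.1) ∧
      ∀ u : ↥(Sᶜ), recolorCount φ u ≤ k) :
    ∃ (M : ℕ) (ψ : Fin (M + 1) → V → ℕ),
      IsRecolSeq G L ψ α β ∧ ∀ u : V, recolorCount ψ u ≤ k := by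
  classical
  simp only [List.nodup_cons, List.mem_cons, List.not_mem_nil, or_false, not_or] at hnodup
  obtain ⟨⟨n12, n1a, n1b, n1c⟩, ⟨n2a, n2b, n2c⟩, ⟨nab, nac⟩, nbc, -⟩ := hnodup
  obtain ⟨m, φ, ⟨r1, r2, r3, r4⟩, hcount⟩ := hrec
  have hST : ∀ u, u ∈ (({v1, v2} : Finset V) ∪ {w1, w2, w3}) ↔ u ∈ S := by
    intro u; simp [hS]; tauto
  obtain ⟨σ, s1, s2, s3⟩ := RC.conv1 G L S _ hST m φ α (fun u => by rw [r1]) r3 r4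
  have okβ : ∀ T, RC.OK G L T β := fun T =>
    ⟨fun v _ => hβ.1 v, fun u w _ _ ha => hβ.2 ha⟩
  have okα : ∀ T, RC.OK G L T α := fun T =>
    ⟨fun v _ => hα.1 v, fun u w _ _ ha => hα.2 ha⟩
  have zero : ∀ u ∈ (({v1, v2} : Finset V) ∪ {w1, w2, w3}), RC.cnt σ u = 0 := s1.cnt_zero
  have cle : ∀ u, RC.cnt σ u ≤ k := by
    intro u
    by_cases hu : u ∈ S
    · rw [zero u ((hST u).2 hu)]; omega
    · rw [s3 ⟨u, hu⟩]; exact hcount _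
  have zv1 : RC.cnt σ v1 = 0 := zero v1 (by simp)
  have zv2 : RC.cnt σ v2 = 0 := zero v2 (by simp)
  have zw1 : RC.cnt σ w1 = 0 := zero w1 (by simp)
  have zw2 : RC.cnt σ w2 = 0 := zero w2 (by simp)
  have zw3 : RC.cnt σ w3 = 0 := zero w3 (by simp)
  have cd : ∀ (x : V) (A T : Finset V), A ⊆ G.neighborFinset x → A ⊆ T →
      (G.neighborFinset x \ T).card ≤ G.degree x - A.card := by
    intro x A T h1 h2
    rw [← G.card_neighborFinset_eq_degree, ← Finset.card_sdiff_of_subset h1]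
    exact Finset.card_le_card (Finset.sdiff_subset_sdiff (Finset.Subset.refl _) h2)
  have d1 := cd w1 {v1} {v1, v2} (by simp [he2.symm]) (by simp)
  have d3 := cd w3 {v2} {v1, v2} (by simp [he5.symm]) (by simp)
  have d2 := cd w2 {v1, v2} {v1, v2} (by simp [Finset.insert_subset_iff, he3.symm, he4.symm])
    (by simp)
  rw [Finset.card_singleton] at d1 d3
  rw [Finset.card_pair n12] at d2
  obtain ⟨τ, t1, t2, t3, t4⟩ := RC.phase1 (T := {v1, v2}) (X := {w1, w2, w3}) hL (okβ _)
    nab nac nbc (by simp [Ne.symm n1a, Ne.symm n2a]) (by simp [Ne.symm n1b, Ne.symm n2b])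
    (by simp [Ne.symm n1c, Ne.symm n2c]) he6 he7.symm (by omega) (by omega) (by omega) rfl
    σ α 0 0 0 15 15 (okα _) s1 (by
      intro u hu hu'
      have hu2 : u ∈ Sᶜ := by
        intro h
        have := (hST u).2 h
        rw [Finset.mem_union] at this
        tauto
      rw [s2 ⟨u, hu2⟩, r2]) (by simp) (by simp) (by simp) (by norm_num)
  have l1 := RC.len_le (G := G) σ w1 {v1, w2} k 4
    (by simp [Finset.insert_subset_iff, he2.symm, he6])
    (by rw [Finset.card_pair n1b]; omega) (fun u _ => cle u)
  have l3 := RC.len_le (G := G) σ w3 {v2, w2} k 4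
    (by simp [Finset.insert_subset_iff, he5.symm, he7.symm])
    (by rw [Finset.card_pair n2b]; omega) (fun u _ => cle u)
  have l2 := RC.len_le (G := G) σ w2 {v1, v2, w1, w3} k 3
    (by simp [Finset.insert_subset_iff, he3.symm, he4.symm, he6.symm, he7])
    (by
      rw [Finset.card_insert_of_notMem (by simp [n12, n1a, n1c]),
        Finset.card_insert_of_notMem (by simp [n2a, n2c]), Finset.card_pair nac]; omega)
    (fun u _ => cle u)
  rw [Finset.sum_eq_zero (by intro x hx; apply zero; simp at hx ⊢; tauto)] at l1 l2 l3
  have c1 := t4 w1 (by simp)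
  have c2 := t4 w2 (by simp)
  have c3 := t4 w3 (by simp)
  simp only [RC.bd, if_true, Ne.symm nab, Ne.symm nac, Ne.symm nbc, if_false, RC.ff, RC.gg]
    at c1 c2 c3
  have tv : ∀ u ∈ ({v1, v2} : Finset V), RC.cnt τ u = 0 := t1.cnt_zero
  have tle : ∀ u, RC.cnt τ u ≤ k := by
    intro u
    by_cases h1 : u ∈ ({v1, v2} : Finset V)
    · rw [tv u h1]; omega
    · by_cases h2 : u ∈ ({w1, w2, w3} : Finset V)
      · simp only [Finset.mem_insert, Finset.mem_singleton] at h2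
        rcases h2 with rfl | rfl | rfl <;> omega
      · rw [t3 u h1 h2]; exact cle u
  have f1 := cd v1 ∅ ∅ (by simp) (by simp)
  have f2 := cd v2 ∅ ∅ (by simp) (by simp)
  rw [Finset.card_empty] at f1 f2
  obtain ⟨ρ, q1, q2, q3, q4⟩ := RC.phase2 (T := ∅) (X := {v1, v2}) hL (okβ _) (by simp)
    (by
      intro x hx
      simp only [Finset.mem_insert, Finset.mem_singleton] at hx
      rcases hx with rfl | rfl <;> omega)
    τ α (fun _ => 0) (okα _) (by simpa using t1) (by
      intro u _ hu
      exact t2 u hu) (by simp)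
  have m1 := RC.len_le (G := G) τ v1 {v2, w2} k 3
    (by simp [Finset.insert_subset_iff, he1, he3])
    (by rw [Finset.card_pair n2b]; omega) (fun u _ => tle u)
  have m2 := RC.len_le (G := G) τ v2 {v1, w2} k 3
    (by simp [Finset.insert_subset_iff, he1.symm, he4])
    (by rw [Finset.card_pair n1b]; omega) (fun u _ => tle u)
  rw [Finset.sum_pair n2b, tv v2 (by simp)] at m1
  rw [Finset.sum_pair n1b, tv v1 (by simp)] at m2
  have g1 := q4 v1 (by simp)
  have g2 := q4 v2 (by simp)
  rw [Finset.card_pair n12] at g1 g2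
  beta_reduce at g1 g2
  obtain ⟨M, ψ, hψ, hcψ⟩ := RC.conv2 G L ρ α q1
  have hfin : RC.play α ρ = β := funext (fun u => q2 u (by simp))
  rw [hfin] at hψ
  refine ⟨M, ψ, hψ, fun u => ?_⟩
  rw [hcψ]
  by_cases h1 : u ∈ ({v1, v2} : Finset V)
  · simp only [Finset.mem_insert, Finset.mem_singleton] at h1
    rcases h1 with rfl | rfl <;> omega
  · rw [q3 u (by simp) h1]; exact tle u
end

section
/- Fix an integer k ≥ 416. Let G be a finite simple graph, L a 10-assignment for G, and α, β two L-colorings of G. Suppose G contains five distinct vertices v1, v2, w1, w2, w3 with edges v1v2, v1w1, v2w1, v2w2, v2w3, w1w2, w2w3, with d_G(v1) = d_G(v2) = 5, d_G(w1) = 7, and d_G(w2) = d_G(w3) = 6. Let S = {v1, v2, w1, w2, w3}. If there exists a k-good recoloring sequence in G − S from the restriction of α to G − S to the restriction of β to G − S, then there exists a k-good recoloring sequence in G from α to β. -/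
namespace Recol

set_option linter.unusedSectionVars false

variable {V : Type} [DecidableEq V]

/-- `φ` restricted to `A` is an `L`-coloring of the subgraph induced on `A`. -/
def Ok (G : SimpleGraph V) (L : V → Finset ℕ) (A : Finset V) (φ : V → ℕ) : Prop :=
  (∀ v ∈ A, φ v ∈ L v) ∧ ∀ u ∈ A, ∀ w ∈ A, G.Adj u w → φ u ≠ φ w

/-- A list of moves is valid on `A` from `φ`. -/
def Valid (G : SimpleGraph V) (L : V → Finset ℕ) (A : Finset V) :
    (V → ℕ) → List (V × ℕ) → Prop
  | φ, [] => Ok G L A φ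
  | φ, m :: σ => Ok G L A φ ∧ m.1 ∈ A ∧ Valid G L A (Function.update φ m.1 m.2) σ

/-- The result of performing a list of moves. -/
def run : (V → ℕ) → List (V × ℕ) → (V → ℕ)
  | φ, [] => φ
  | φ, m :: σ => run (Function.update φ m.1 m.2) σ

/-- The number of moves at `u`. -/
def cnt : List (V × ℕ) → V → ℕ
  | [], _ => 0
  | m :: σ, u => (if m.1 = u then 1 else 0) + cnt σ u

/-- Colors of the moves at the neighbors of `x`. -/
def ev (G : SimpleGraph V) [DecidableRel G.Adj] (x : V) : List (V × ℕ) → List ℕ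
  | [] => []
  | m :: σ => if G.Adj x m.1 then m.2 :: ev G x σ else ev G x σ

variable {G : SimpleGraph V} [DecidableRel G.Adj] {L : V → Finset ℕ}

lemma Valid.ok {A : Finset V} {φ : V → ℕ} {σ : List (V × ℕ)} (h : Valid G L A φ σ) :
    Ok G L A φ := by
  cases σ with
  | nil => exact h
  | cons m σ => exact h.1

lemma valid_append {A : Finset V} {φ : V → ℕ} {σ τ : List (V × ℕ)} (h : Valid G L A φ σ)
    (h' : Valid G L A (run φ σ) τ) : Valid G L A φ (σ ++ τ) := by
  induction σ generalizing φ with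
  | nil => exact h'
  | cons m σ ih => exact ⟨h.1, h.2.1, ih h.2.2 h'⟩

lemma run_append {φ : V → ℕ} {σ τ : List (V × ℕ)} : run φ (σ ++ τ) = run (run φ σ) τ := by
  induction σ generalizing φ with
  | nil => rfl
  | cons m σ ih => exact ih

lemma cnt_append {σ τ : List (V × ℕ)} (u : V) : cnt (σ ++ τ) u = cnt σ u + cnt τ u := by
  induction σ with
  | nil => simp [cnt]
  | cons m σ ih => simp [cnt, ih, add_assoc]

lemma cnt_zero {A : Finset V} {φ : V → ℕ} {σ : List (V × ℕ)} (h : Valid G L A φ σ) {u : V}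
    (hu : u ∉ A) : cnt σ u = 0 := by
  induction σ generalizing φ with
  | nil => rfl
  | cons m σ ih =>
    have : m.1 ≠ u := fun e => hu (e ▸ h.2.1)
    simp [cnt, ih h.2.2, this]

lemma ok_run {A : Finset V} {φ : V → ℕ} {σ : List (V × ℕ)} (h : Valid G L A φ σ) :
    Ok G L A (run φ σ) := by
  induction σ generalizing φ with
  | nil => exact h
  | cons m σ ih => exact ih h.2.2

lemma ev_length [Fintype V] (x : V) (σ : List (V × ℕ)) :
    (ev G x σ).length = ∑ u ∈ G.neighborFinset x, cnt σ u := by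
  induction σ with
  | nil => simp [ev, cnt]
  | cons m σ ih =>
    simp only [ev, cnt, Finset.sum_add_distrib, Finset.sum_ite_eq, SimpleGraph.mem_neighborFinset]
    split_ifs <;> simp [ih, add_comm]

lemma ok_update {A : Finset V} {φ : V → ℕ} (h : Ok G L A φ) {x : V} {z : ℕ} (hz : z ∈ L x)
    (hn : ∀ u ∈ A, G.Adj x u → φ u ≠ z) : Ok G L A (Function.update φ x z) := by
  refine ⟨fun v hv => ?_, fun u hu w hw hadj => ?_⟩
  · by_cases e : v = x
    · subst e; simpa using hz
    · simpa [e] using h.1 v hv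
  · by_cases e : u = x
    · subst e
      have : w ≠ u := hadj.ne'
      simpa [this] using (hn w hw hadj).symm
    · by_cases e' : w = x
      · subst e'
        simpa [e] using hn u hu hadj.symm
      · simpa [e, e'] using h.2 u hu w hw hadj

lemma choose_color (hL : ∀ u, (L u).card = 10) (x : V) (N : Finset V) (χ : V → ℕ) (F : List ℕ)
    (h : N.card + F.length < 10) :
    ∃ z ∈ L x, (∀ u ∈ N, χ u ≠ z) ∧ z ∉ F := by
  have : (N.image χ ∪ F.toFinset).card < (L x).card := by
    rw [hL]
    have h1 := Finset.card_union_le (N.image χ) F.toFinset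
    have h2 : (N.image χ).card ≤ N.card := Finset.card_image_le
    have h3 := F.toFinset_card_le
    omega
  obtain ⟨z, hz, hz'⟩ := Finset.exists_mem_notMem_of_card_lt_card this
  refine ⟨z, hz, fun u hu e => hz' ?_, fun hF => hz' ?_⟩
  · exact Finset.mem_union_left _ (e ▸ Finset.mem_image_of_mem χ hu)
  · exact Finset.mem_union_right _ (by simpa using hF)

/-- Credit after an event that does not conflict. -/
lemma credit_step {x v : V} {c a ℓ : ℕ} {σ : List (V × ℕ)}
    (h : a ∉ (ev G x ((v, c) :: σ)).take ℓ) :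
    ∃ ℓ', ℓ' ≤ ℓ ∧ a ∉ (ev G x σ).take ℓ' ∧
      ∀ n K, n + ℓ' ≤ (ev G x σ).length + K → n + ℓ ≤ (ev G x ((v, c) :: σ)).length + K := by
  by_cases hadj : G.Adj x v
  · simp only [ev, hadj, if_true] at h ⊢
    cases ℓ with
    | zero => exact ⟨0, le_rfl, by simp, fun n K hn => by simp; omega⟩
    | succ ℓ =>
      refine ⟨ℓ, by omega, ?_, fun n K hn => by simp; omega⟩
      simp at h; exact h.2
  · simp only [ev, hadj, if_false] at h ⊢
    exact ⟨ℓ, le_rfl, h, fun n K hn => hn⟩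

lemma credit_zero {x v : V} {c ℓ : ℕ} {σ : List (V × ℕ)} (hadj : G.Adj x v)
    (h : c ∉ (ev G x ((v, c) :: σ)).take ℓ) : ℓ = 0 := by
  cases ℓ with
  | zero => rfl
  | succ ℓ => simp [ev, hadj] at h

lemma not_head {x v : V} {c z ℓ : ℕ} {σ : List (V × ℕ)} (hadj : G.Adj x v)
    (h : z ∉ (ev G x ((v, c) :: σ)).take (ℓ + 1)) : z ≠ c := by
  simp [ev, hadj] at h; exact h.1

/-- Ok-ness after an event of the base sequence. -/
lemma ok_event {A B : Finset V} {φ χ : V → ℕ} {v : V} {c : ℕ} (hv : v ∈ A)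
    (hok : Ok G L A (Function.update φ v c)) (hag : ∀ u ∈ A, χ u = φ u) (hχ : Ok G L B χ)
    (hB : ∀ u ∈ B, u ∉ A → G.Adj v u → χ u ≠ c) : Ok G L B (Function.update χ v c) := by
  refine ok_update hχ (by simpa using hok.1 v hv) fun u hu hadj => ?_
  by_cases hA : u ∈ A
  · have := hok.2 v hv u hA hadj
    have hne : u ≠ v := hadj.ne'
    rw [hag u hA]
    simpa [hne] using this.symm
  · exact hB u hu hA hadj

lemma agree_event {A : Finset V} {φ χ : V → ℕ} {v : V} {c : ℕ} (hag : ∀ u ∈ A, χ u = φ u) :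
    ∀ u ∈ A, Function.update χ v c u = Function.update φ v c u := by
  intro u hu
  by_cases e : u = v
  · subst e; simp
  · simp [e, hag u hu]

lemma agree_off {A : Finset V} {φ χ : V → ℕ} {x : V} {z : ℕ} (hx : x ∉ A)
    (hag : ∀ u ∈ A, χ u = φ u) : ∀ u ∈ A, Function.update χ x z u = φ u := by
  intro u hu
  have : u ≠ x := fun e => hx (e ▸ hu)
  simp [this, hag u hu]

/-- Extending by one vertex with at most 4 neighbors. -/
lemma single_aux (hL : ∀ u, (L u).card = 10) {A : Finset V} {x : V} (hx : x ∉ A)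
    (hd : (A.filter (G.Adj x)).card ≤ 4) (σ : List (V × ℕ)) :
    ∀ (φ χ : V → ℕ) (ℓ : ℕ), ℓ ≤ 5 → Valid G L A φ σ → (∀ u ∈ A, χ u = φ u) →
      Ok G L (insert x A) χ → χ x ∉ (ev G x σ).take ℓ →
      ∃ σ', Valid G L (insert x A) χ σ' ∧ (∀ u ∈ A, run χ σ' u = run φ σ u) ∧
        (∀ u ∈ A, cnt σ' u = cnt σ u) ∧ 5 * cnt σ' x + ℓ ≤ (ev G x σ).length + 5 := by
  induction σ with
  | nil =>
    intro φ χ ℓ hℓ hv hag hok _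
    exact ⟨[], hok, hag, fun _ _ => rfl, by simp [cnt, ev]; omega⟩
  | cons m σ ih =>
    obtain ⟨v, c⟩ := m
    intro φ χ ℓ hℓ hv hag hok hcr
    have hvA : v ∈ A := hv.2.1
    have hvx : v ≠ x := fun e => hx (e ▸ hvA)
    have hokA : Ok G L A (Function.update φ v c) := hv.2.2.ok
    -- the no-conflict step
    have step : ∀ (χ : V → ℕ) (ℓ : ℕ), ℓ ≤ 5 → (∀ u ∈ A, χ u = φ u) →
        Ok G L (insert x A) χ → χ x ∉ (ev G x ((v, c) :: σ)).take ℓ →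
        (G.Adj x v → χ x ≠ c) →
        ∃ σ', Valid G L (insert x A) χ σ' ∧ (∀ u ∈ A, run χ σ' u = run φ ((v, c) :: σ) u) ∧
        (∀ u ∈ A, cnt σ' u = cnt ((v, c) :: σ) u) ∧
          5 * cnt σ' x + ℓ ≤ (ev G x ((v, c) :: σ)).length + 5 := by
      intro χ ℓ hℓ hag hok hcr hnc
      obtain ⟨ℓ', hle, hcr', hb⟩ := credit_step hcr
      have hok' : Ok G L (insert x A) (Function.update χ v c) := by
        refine ok_event hvA hokA hag hok fun u hu hA hadj => ?_
        rcases Finset.mem_insert.1 hu with rfl | h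
        · exact hnc hadj.symm
        · exact absurd h hA
      obtain ⟨σ', h1, h2, h3, h4⟩ := ih (Function.update φ v c) (Function.update χ v c) ℓ'
        (by omega) hv.2.2 (agree_event hag) hok' (by simpa [hvx.symm] using hcr')
      refine ⟨(v, c) :: σ', ⟨hok, Finset.mem_insert_of_mem hvA, h1⟩, h2,
        fun u hu => by simp [cnt, h3 u hu], ?_⟩
      have := hb _ _ h4
      simpa [cnt, hvx] using this
    by_cases hconf : G.Adj x v ∧ χ x = c
    · obtain ⟨hadj, hc⟩ := hconf
      obtain ⟨z, hz, hzn, hzF⟩ := choose_color hL x (A.filter (G.Adj x)) χ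
        ((ev G x ((v, c) :: σ)).take 5) (by
          have := List.length_take_le 5 (ev G x ((v, c) :: σ)); omega)
      have hok1 : Ok G L (insert x A) (Function.update χ x z) := by
        refine ok_update hok hz fun u hu ha => ?_
        rcases Finset.mem_insert.1 hu with rfl | h
        · exact absurd ha (G.loopless.irrefl _)
        · exact hzn u (by simp [h, ha])
      obtain ⟨σ', h1, h2, h3, h4⟩ := step (Function.update χ x z) 5 le_rfl (agree_off hx hag) hok1
        (by simpa using hzF) (fun _ => by simpa using not_head hadj hzF)
      have hℓ0 : ℓ = 0 := credit_zero hadj (hc ▸ hcr)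
      refine ⟨(x, z) :: σ', ⟨hok, Finset.mem_insert_self _ _, h1⟩, h2, fun u hu => ?_, ?_⟩
      · have : x ≠ u := fun e => hx (e ▸ hu)
        simpa [cnt, this] using h3 u hu
      · simp only [cnt, if_true] at h4 ⊢; omega
    · exact step χ ℓ hℓ hag hok hcr (fun h h' => hconf ⟨h, h'⟩)

lemma single (hL : ∀ u, (L u).card = 10) {A : Finset V} {x : V} (hx : x ∉ A)
    (hd : (A.filter (G.Adj x)).card ≤ 4) {σ : List (V × ℕ)} {α β : V → ℕ}
    (hv : Valid G L A α σ) (hr : ∀ u ∈ A, run α σ u = β u)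
    (hα : Ok G L (insert x A) α) (hβ : Ok G L (insert x A) β) :
    ∃ σ', Valid G L (insert x A) α σ' ∧ (∀ u ∈ insert x A, run α σ' u = β u) ∧
      (∀ u ∈ A, cnt σ' u = cnt σ u) ∧ 5 * cnt σ' x ≤ (ev G x σ).length + 10 := by
  obtain ⟨σ', h1, h2, h3, h4⟩ := single_aux hL hx hd σ α α 0 (by omega) hv (fun _ _ => rfl) hα
    (by simp)
  have hag : ∀ u ∈ A, run α σ' u = β u := fun u hu => (h2 u hu).trans (hr u hu)
  have hok := ok_run h1
  have hx' : x ∈ insert x A := Finset.mem_insert_self _ _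
  have hok1 : Ok G L (insert x A) (Function.update (run α σ') x (β x)) := by
    refine ok_update hok (hβ.1 x hx') fun u hu ha => ?_
    rcases Finset.mem_insert.1 hu with rfl | h
    · exact absurd ha (G.loopless.irrefl _)
    · rw [hag u h]; exact hβ.2 u hu x hx' ha.symm
  refine ⟨σ' ++ [(x, β x)], valid_append h1 ⟨hok, hx', hok1⟩, fun u hu => ?_, fun u hu => ?_, ?_⟩
  · rw [run_append]
    simp only [run]
    by_cases e : u = x
    · subst e; simp
    · simp only [Function.update_of_ne e]
      exact hag u (Finset.mem_of_mem_insert_of_ne hu e)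
  · have : x ≠ u := fun e => hx (e ▸ hu)
    simp [cnt_append, cnt, this, h3 u hu]
  · simp [cnt_append, cnt]; omega

/-- Extending by two adjacent vertices, each with at most 4 other neighbors. The vertex `y` may
force `x` to move away at most `t` times. -/
lemma pair_aux (hL : ∀ u, (L u).card = 10) {A : Finset V} {x y : V} (hx : x ∉ A) (hy : y ∉ A)
    (hxy : G.Adj x y)
    (hdx : (A.filter (G.Adj x)).card ≤ 4) (hdy : (A.filter (G.Adj y)).card ≤ 4)
    (σ : List (V × ℕ)) :
    ∀ (φ χ : V → ℕ) (t ℓ r : ℕ), ℓ ≤ 4 → r ≤ 5 → Valid G L A φ σ → (∀ u ∈ A, χ u = φ u) →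
      Ok G L (insert x (insert y A)) χ → χ x ∉ (ev G x σ).take ℓ → χ y ∉ (ev G y σ).take r →
      ∃ σ', Valid G L (insert x (insert y A)) χ σ' ∧ (∀ u ∈ A, run χ σ' u = run φ σ u) ∧
        (∀ u ∈ A, cnt σ' u = cnt σ u) ∧ 4 * cnt σ' x + ℓ ≤ (ev G x σ).length + (4 + 8 * t) ∧
        (4 * cnt σ' y + t + r ≤ (ev G y σ).length + 5 ∨ cnt σ' y ≤ t) := by
  have hne : x ≠ y := hxy.ne
  induction σ with
  | nil =>
    intro φ χ t ℓ r hℓ hr hv hag hok _ _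
    exact ⟨[], hok, hag, fun _ _ => rfl, by simp [cnt, ev]; omega, Or.inr (by simp [cnt])⟩
  | cons m σ ih =>
    obtain ⟨v, c⟩ := m
    intro φ χ t ℓ r hℓ hr hv hag hok hcrx hcry
    have hvA : v ∈ A := hv.2.1
    have hvx : v ≠ x := fun e => hx (e ▸ hvA)
    have hvy : v ≠ y := fun e => hy (e ▸ hvA)
    have hokA : Ok G L A (Function.update φ v c) := hv.2.2.ok
    have hxm : x ∈ insert x (insert y A) := by simp
    have hym : y ∈ insert x (insert y A) := by simp
    have hcardx : ((insert y A).filter (G.Adj x)).card ≤ 5 := by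
      rw [Finset.filter_insert, if_pos hxy]
      exact (Finset.card_insert_le _ _).trans (by omega)
    have hcardy : ((insert x A).filter (G.Adj y)).card ≤ 5 := by
      rw [Finset.filter_insert, if_pos hxy.symm]
      exact (Finset.card_insert_le _ _).trans (by omega)
    -- the no-conflict step
    have step : ∀ (χ : V → ℕ) (t ℓ r : ℕ), ℓ ≤ 4 → r ≤ 5 → (∀ u ∈ A, χ u = φ u) →
        Ok G L (insert x (insert y A)) χ → χ x ∉ (ev G x ((v, c) :: σ)).take ℓ →
        χ y ∉ (ev G y ((v, c) :: σ)).take r →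
        (G.Adj x v → χ x ≠ c) → (G.Adj y v → χ y ≠ c) →
        ∃ σ', Valid G L (insert x (insert y A)) χ σ' ∧
        (∀ u ∈ A, run χ σ' u = run φ ((v, c) :: σ) u) ∧
        (∀ u ∈ A, cnt σ' u = cnt ((v, c) :: σ) u) ∧
          4 * cnt σ' x + ℓ ≤ (ev G x ((v, c) :: σ)).length + (4 + 8 * t) ∧
        (4 * cnt σ' y + t + r ≤ (ev G y ((v, c) :: σ)).length + 5 ∨ cnt σ' y ≤ t) := by
      intro χ t ℓ r hℓ hr hag hok hcrx hcry hncx hncy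
      obtain ⟨ℓ', hle, hcrx', hbx⟩ := credit_step hcrx
      obtain ⟨r', hle', hcry', hby⟩ := credit_step hcry
      have hok' : Ok G L (insert x (insert y A)) (Function.update χ v c) := by
        refine ok_event hvA hokA hag hok fun u hu hA hadj => ?_
        rcases Finset.mem_insert.1 hu with rfl | h
        · exact hncx hadj.symm
        · rcases Finset.mem_insert.1 h with rfl | h
          · exact hncy hadj.symm
          · exact absurd h hA
      obtain ⟨σ', h1, h2, h3, h4, h5⟩ := ih (Function.update φ v c) (Function.update χ v c) t ℓ' r'
        (by omega) (by omega) hv.2.2 (agree_event hag) hok' (by simpa [hvx.symm] using hcrx')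
        (by simpa [hvy.symm] using hcry')
      refine ⟨(v, c) :: σ', ⟨hok, by simp [hvA], h1⟩, h2,
        fun u hu => by simp [cnt, h3 u hu], ?_, ?_⟩
      · have := hbx _ _ h4
        simpa [cnt, hvx] using this
      · rcases h5 with h5 | h5
        · have := hby _ _ h5
          left; simpa [cnt, hvy] using this
        · right; simpa [cnt, hvy] using h5
    by_cases hcx : G.Adj x v ∧ χ x = c
    · obtain ⟨hadj, hc⟩ := hcx
      obtain ⟨z, hz, hzn, hzF⟩ := choose_color hL x ((insert y A).filter (G.Adj x)) χ
        ((ev G x ((v, c) :: σ)).take 4) (by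
          have := List.length_take_le 4 (ev G x ((v, c) :: σ)); omega)
      have hok1 : Ok G L (insert x (insert y A)) (Function.update χ x z) := by
        refine ok_update hok hz fun u hu ha => ?_
        rcases Finset.mem_insert.1 hu with rfl | h
        · exact absurd ha (G.loopless.irrefl _)
        · exact hzn u (Finset.mem_filter.2 ⟨h, ha⟩)
      have hyc : χ y ≠ c := fun e => hok.2 x hxm y hym hxy (hc.trans e.symm)
      obtain ⟨σ', h1, h2, h3, h4, h5⟩ := step (Function.update χ x z) t 4 r le_rfl hr
        (agree_off hx hag) hok1
        (by simpa using hzF) (by simpa [hne.symm] using hcry)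
        (fun _ => by simpa using not_head hadj hzF)
        (fun _ => by simpa [hne.symm] using hyc)
      have hℓ0 : ℓ = 0 := credit_zero hadj (hc ▸ hcrx)
      refine ⟨(x, z) :: σ', ⟨hok, hxm, h1⟩, h2, fun u hu => ?_, ?_, ?_⟩
      · have : x ≠ u := fun e => hx (e ▸ hu)
        simpa [cnt, this] using h3 u hu
      · simp only [cnt, if_true] at h4 ⊢; omega
      · simpa [cnt, hne] using h5
    by_cases hcy : G.Adj y v ∧ χ y = c
    swap
    · exact step χ t ℓ r hℓ hr hag hok hcrx hcry (fun h h' => hcx ⟨h, h'⟩)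
        (fun h h' => hcy ⟨h, h'⟩)
    obtain ⟨hadj, hc⟩ := hcy
    have hr0 : r = 0 := credit_zero hadj (hc ▸ hcry)
    have hxc : χ x ≠ c := fun e => hok.2 x hxm y hym hxy (e.trans hc.symm)
    have hpos : 1 ≤ (ev G y ((v, c) :: σ)).length := by simp [ev, hadj]
    cases t with
    | zero =>
      obtain ⟨z, hz, hzn, hzF⟩ := choose_color hL y ((insert x A).filter (G.Adj y)) χ
        ((ev G y ((v, c) :: σ)).take 4) (by
          have := List.length_take_le 4 (ev G y ((v, c) :: σ)); omega)
      have hok1 : Ok G L (insert x (insert y A)) (Function.update χ y z) := by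
        refine ok_update hok hz fun u hu ha => ?_
        rw [Finset.insert_comm] at hu
        rcases Finset.mem_insert.1 hu with rfl | h
        · exact absurd ha (G.loopless.irrefl _)
        · exact hzn u (Finset.mem_filter.2 ⟨h, ha⟩)
      obtain ⟨σ', h1, h2, h3, h4, h5⟩ := step (Function.update χ y z) 0 ℓ 4 hℓ (by omega)
        (agree_off hy hag) hok1
        (by simpa [hne] using hcrx) (by simpa using hzF)
        (fun _ => by simpa [hne] using hxc)
        (fun _ => by simpa using not_head hadj hzF)
      refine ⟨(y, z) :: σ', ⟨hok, hym, h1⟩, h2, fun u hu => ?_, ?_, ?_⟩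
      · have : y ≠ u := fun e => hy (e ▸ hu)
        simpa [cnt, this] using h3 u hu
      · simpa [cnt, hne.symm] using h4
      · simp only [cnt, if_true] at h5 ⊢; omega
    | succ t =>
      obtain ⟨z, hz, hzn, hzF⟩ := choose_color hL y (A.filter (G.Adj y)) χ
        ((ev G y ((v, c) :: σ)).take 5) (by
          have := List.length_take_le 5 (ev G y ((v, c) :: σ)); omega)
      obtain ⟨z', hz', hzn', hzF'⟩ := choose_color hL x ((insert y A).filter (G.Adj x)) χ
        [z, c] (by simp; omega)
      simp only [List.mem_cons, List.not_mem_nil, or_false, not_or] at hzF'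
      have hok1 : Ok G L (insert x (insert y A)) (Function.update χ x z') := by
        refine ok_update hok hz' fun u hu ha => ?_
        rcases Finset.mem_insert.1 hu with rfl | h
        · exact absurd ha (G.loopless.irrefl _)
        · exact hzn' u (Finset.mem_filter.2 ⟨h, ha⟩)
      have hok2 : Ok G L (insert x (insert y A))
          (Function.update (Function.update χ x z') y z) := by
        refine ok_update hok1 hz fun u hu ha => ?_
        rcases Finset.mem_insert.1 hu with rfl | h
        · simpa using hzF'.1
        · rcases Finset.mem_insert.1 h with rfl | h
          · exact absurd ha (G.loopless.irrefl _)
          · have : u ≠ x := fun e => hx (e ▸ h)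
            simpa [this] using hzn u (Finset.mem_filter.2 ⟨h, ha⟩)
      obtain ⟨σ', h1, h2, h3, h4, h5⟩ := step (Function.update (Function.update χ x z') y z) t 0 5
        (by omega) le_rfl
        (agree_off hy (agree_off hx hag)) hok2
        (by simp) (by simpa using hzF)
        (fun _ => by simpa [hne] using hzF'.2)
        (fun _ => by simpa using not_head hadj hzF)
      refine ⟨(x, z') :: (y, z) :: σ', ⟨hok, hxm, hok1, hym, h1⟩, h2, fun u hu => ?_, ?_, ?_⟩
      · have e1 : y ≠ u := fun e => hy (e ▸ hu)
        have e2 : x ≠ u := fun e => hx (e ▸ hu)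
        simpa [cnt, e1, e2] using h3 u hu
      · simp only [cnt, if_true, hne.symm, if_false]; omega
      · simp only [cnt, if_true, hne, if_false]; omega

lemma pair (hL : ∀ u, (L u).card = 10) {A : Finset V} {x y : V} (hx : x ∉ A) (hy : y ∉ A)
    (hxy : G.Adj x y)
    (hdx : (A.filter (G.Adj x)).card ≤ 4) (hdy : (A.filter (G.Adj y)).card ≤ 4)
    (t : ℕ) {σ : List (V × ℕ)} {α β : V → ℕ}
    (hv : Valid G L A α σ) (hr : ∀ u ∈ A, run α σ u = β u)
    (hα : Ok G L (insert x (insert y A)) α) (hβ : Ok G L (insert x (insert y A)) β) :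
    ∃ σ', Valid G L (insert x (insert y A)) α σ' ∧
      (∀ u ∈ insert x (insert y A), run α σ' u = β u) ∧
      (∀ u ∈ A, cnt σ' u = cnt σ u) ∧ 4 * cnt σ' x ≤ (ev G x σ).length + (12 + 8 * t) ∧
      (4 * cnt σ' y + t ≤ (ev G y σ).length + 9 ∨ cnt σ' y ≤ t + 1) := by
  obtain ⟨σ', h1, h2, h3, h4, h5⟩ := pair_aux hL hx hy hxy hdx hdy σ α α t 0 0 (by omega)
    (by omega) hv (fun _ _ => rfl) hα (by simp) (by simp)
  have hne : x ≠ y := hxy.ne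
  have hag : ∀ u ∈ A, run α σ' u = β u := fun u hu => (h2 u hu).trans (hr u hu)
  have hok := ok_run h1
  have hxm : x ∈ insert x (insert y A) := by simp
  have hym : y ∈ insert x (insert y A) := by simp
  have hcardx : ((insert y A).filter (G.Adj x)).card ≤ 5 := by
    rw [Finset.filter_insert, if_pos hxy]
    exact (Finset.card_insert_le _ _).trans (by omega)
  obtain ⟨z, hz, hzn, hzF⟩ := choose_color hL x ((insert y A).filter (G.Adj x)) (run α σ')
    [β y] (by simp; omega)
  simp only [List.mem_cons, List.not_mem_nil, or_false] at hzF
  have hok1 : Ok G L (insert x (insert y A)) (Function.update (run α σ') x z) := by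
    refine ok_update hok hz fun u hu ha => ?_
    rcases Finset.mem_insert.1 hu with rfl | h
    · exact absurd ha (G.loopless.irrefl _)
    · exact hzn u (Finset.mem_filter.2 ⟨h, ha⟩)
  have hag1 := agree_off (z := z) hx hag
  have hok2 : Ok G L (insert x (insert y A))
      (Function.update (Function.update (run α σ') x z) y (β y)) := by
    refine ok_update hok1 (hβ.1 y hym) fun u hu ha => ?_
    rcases Finset.mem_insert.1 hu with rfl | h
    · simpa using hzF
    · rcases Finset.mem_insert.1 h with rfl | h
      · exact absurd ha (G.loopless.irrefl _)
      · rw [hag1 u h]; exact hβ.2 u hu y hym ha.symm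
  have hag2 := agree_off (z := β y) hy hag1
  have hok3 : Ok G L (insert x (insert y A)) (Function.update
      (Function.update (Function.update (run α σ') x z) y (β y)) x (β x)) := by
    refine ok_update hok2 (hβ.1 x hxm) fun u hu ha => ?_
    rcases Finset.mem_insert.1 hu with rfl | h
    · exact absurd ha (G.loopless.irrefl _)
    · rcases Finset.mem_insert.1 h with rfl | h
      · simpa using hβ.2 u hym x hxm ha.symm
      · rw [hag2 u h]; exact hβ.2 u hu x hxm ha.symm
  have hag3 := agree_off (z := β x) hx hag2
  refine ⟨σ' ++ [(x, z), (y, β y), (x, β x)],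
    valid_append h1 ⟨hok, hxm, hok1, hym, hok2, hxm, hok3⟩, fun u hu => ?_, fun u hu => ?_, ?_, ?_⟩
  · rw [run_append]
    simp only [run]
    rcases Finset.mem_insert.1 hu with rfl | h
    · simp
    · rcases Finset.mem_insert.1 h with rfl | h
      · simp [hne.symm]
      · exact hag3 u h
  · have e1 : y ≠ u := fun e => hy (e ▸ hu)
    have e2 : x ≠ u := fun e => hx (e ▸ hu)
    simp [cnt_append, cnt, e1, e2, h3 u hu]
  · simp [cnt_append, cnt, hne.symm]; omega
  · simp [cnt_append, cnt, hne]; omega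

/-- Upper bound for the number of events. -/
lemma ev_bound [Fintype V] {k : ℕ} {x : V} {σ : List (V × ℕ)} (hk : ∀ u, cnt σ u ≤ k)
    (D : Finset V) (hD : D ⊆ G.neighborFinset x) :
    (ev G x σ).length ≤ ∑ u ∈ D, cnt σ u + (G.degree x - D.card) * k := by
  rw [ev_length, ← Finset.sum_sdiff hD, add_comm, ← SimpleGraph.card_neighborFinset_eq_degree,
    ← Finset.card_sdiff_of_subset hD]
  have := Finset.sum_le_card_nsmul (G.neighborFinset x \ D) (cnt σ) k (fun u _ => hk u)
  simpa using this

lemma card_bound [Fintype V] {x : V} {A : Finset V} (D : Finset V)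
    (hD : D ⊆ G.neighborFinset x) (hA : ∀ u ∈ D, u ∉ A) :
    (A.filter (G.Adj x)).card ≤ G.degree x - D.card := by
  rw [← SimpleGraph.card_neighborFinset_eq_degree, ← Finset.card_sdiff_of_subset hD]
  refine Finset.card_le_card fun u hu => ?_
  simp only [Finset.mem_filter] at hu
  simp only [Finset.mem_sdiff, SimpleGraph.mem_neighborFinset]
  exact ⟨hu.2, fun h => hA u h hu.1⟩

/-- From a list of moves to a recoloring sequence. -/
lemma to_seq [Fintype V] (σ : List (V × ℕ)) : ∀ φ : V → ℕ, Valid G L Finset.univ φ σ →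
    ∃ (M : ℕ) (ψ : Fin (M + 1) → V → ℕ),
      IsRecolSeq G L ψ φ (run φ σ) ∧ ∀ u, recolorCount ψ u ≤ cnt σ u := by
  have key : ∀ φ : V → ℕ, Ok G L Finset.univ φ → IsLColoring G L φ := fun φ h =>
    ⟨fun v => h.1 v (Finset.mem_univ _), fun u w a => h.2 u (Finset.mem_univ _) w
      (Finset.mem_univ _) a⟩
  induction σ with
  | nil =>
    intro φ h
    exact ⟨0, fun _ => φ, ⟨rfl, rfl, fun _ => key φ h, fun i => i.elim0⟩, fun u => by
      simp [recolorCount]⟩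
  | cons m σ ih =>
    obtain ⟨v, c⟩ := m
    intro φ h
    obtain ⟨M, ψ, ⟨h0, hl, hc, hs⟩, hn⟩ := ih _ h.2.2
    by_cases e : φ v = c
    · have e' : Function.update φ v c = φ := by subst e; simp
      refine ⟨M, ψ, ⟨h0.trans e', hl, hc, hs⟩, fun u => (hn u).trans ?_⟩
      simp [cnt]
    · refine ⟨M + 1, Fin.cons φ ψ, ⟨rfl, ?_, ?_, ?_⟩, fun u => ?_⟩
      · rw [← Fin.succ_last, Fin.cons_succ]; exact hl
      · intro i
        refine Fin.cases ?_ (fun j => ?_) i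
        · exact key φ h.1
        · rw [Fin.cons_succ]; exact hc j
      · intro i
        refine Fin.cases ?_ (fun j => ?_) i
        · refine ⟨v, ?_, fun w hw => ?_⟩
          · simpa [h0] using e
          · by_contra hwv
            simp [h0, hwv] at hw
        · have := hs j
          simpa [← Fin.succ_castSucc] using this
      · have := hn u
        simp only [recolorCount, Finset.card_filter] at this ⊢
        rw [Fin.sum_univ_succ]
        simp only [← Fin.succ_castSucc, Fin.cons_succ, Fin.castSucc_zero, Fin.cons_zero, cnt, h0]
        refine add_le_add ?_ this
        by_cases hvu : v = u
        · simp [hvu]; split_ifs <;> omega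
        · simp [hvu, Ne.symm hvu]

/-- From a recoloring sequence of an induced subgraph to a list of moves. -/
lemma of_seq [Fintype V] {S : Set V} {A : Finset V} (hA : ∀ v, v ∈ A ↔ v ∈ Sᶜ) (m : ℕ) :
    ∀ (α β : V → ℕ) (φ : Fin (m + 1) → ↥(Sᶜ) → ℕ),
      IsRecolSeq (G.induce Sᶜ) (fun u => L u.1) φ (fun u => α u.1) (fun u => β u.1) →
      ∃ σ, Valid G L A α σ ∧ (∀ u ∈ A, run α σ u = β u) ∧
        ∀ u : ↥(Sᶜ), cnt σ u.1 = recolorCount φ u := by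
  have key : ∀ α : V → ℕ, IsLColoring (G.induce Sᶜ) (fun u => L u.1) (fun u => α u.1) →
      Ok G L A α := fun α h =>
    ⟨fun v hv => h.1 ⟨v, (hA v).1 hv⟩, fun u hu w hw a =>
      h.2 (u := ⟨u, (hA u).1 hu⟩) (w := ⟨w, (hA w).1 hw⟩) a⟩
  induction m with
  | zero =>
    intro α β φ ⟨h0, hl, hc, hs⟩
    refine ⟨[], key α (h0 ▸ hc 0), fun u hu => ?_, fun u => by simp [cnt, recolorCount]⟩
    have : (fun u : ↥(Sᶜ) => α u.1) = fun u => β u.1 := h0.symm.trans hl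
    exact congrFun this ⟨u, (hA u).1 hu⟩
  | succ m ih =>
    intro α β φ ⟨h0, hl, hc, hs⟩
    obtain ⟨v, hv, hvu⟩ := hs 0
    simp only [Fin.castSucc_zero, Fin.succ_zero_eq_one] at hv hvu
    have hup : φ 1 = fun u : ↥(Sᶜ) => Function.update α v.1 (φ 1 v) u.1 := by
      funext u
      by_cases e : u = v
      · subst e; simp
      · have : u.1 ≠ v.1 := fun h => e (Subtype.ext h)
        simp only [Function.update_of_ne this]
        by_contra hcon
        refine e (hvu u ?_)
        rw [h0]; exact fun h => hcon h.symm
    obtain ⟨σ, h1, h2, h3⟩ := ih (Function.update α v.1 (φ 1 v)) β (Fin.tail φ)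
      ⟨by rw [← hup]; rfl, by rw [← hl]; rfl, fun i => hc i.succ, fun i => by
        have := hs i.succ
        simpa [Fin.tail, ← Fin.succ_castSucc] using this⟩
    refine ⟨(v.1, φ 1 v) :: σ, ⟨key α (h0 ▸ hc 0), (hA _).2 v.2, h1⟩, h2, fun u => ?_⟩
    have : cnt σ u.1 = ∑ i : Fin m,
        if φ i.castSucc.succ u ≠ φ i.succ.succ u then 1 else 0 := by
      rw [h3 u, recolorCount, Finset.card_filter]; rfl
    simp only [recolorCount, Finset.card_filter]
    rw [Fin.sum_univ_succ]
    simp only [← Fin.succ_castSucc, cnt]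
    rw [this]
    congr 1
    simp only [Fin.castSucc_zero, Fin.succ_zero_eq_one]
    by_cases e : v = u
    · subst e; simp [hv]
    · have h' : v.1 ≠ u.1 := fun h => e (Subtype.ext h)
      have : φ 0 u = φ 1 u := by
        by_contra hcon
        exact e (hvu u hcon).symm
      simp [h', this]

end Recol

/-- configuration RC of Fig. more-reduc (d): if `G` contains this configuration and `G − S` has a
`k`-good recoloring sequence between the restrictions of `α` and `β` (`k ≥ 416`),
then `G` has a `k`-good recoloring sequence from `α` to `β`. -/
theorem stmt_14 {V : Type} [Fintype V] [DecidableEq V]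
    (G : SimpleGraph V) [DecidableRel G.Adj]
    (k : ℕ) (hk : 416 ≤ k)
    (L : V → Finset ℕ) (hL : ∀ u, (L u).card = 10)
    (α β : V → ℕ) (hα : IsLColoring G L α) (hβ : IsLColoring G L β)
    (v1 v2 w1 w2 w3 : V) (hnodup : ([v1, v2, w1, w2, w3] : List V).Nodup)
    (he1: G.Adj v1 v2)
    (he2: G.Adj v1 w1)
    (he3: G.Adj v2 w1)
    (he4: G.Adj v2 w2)
    (he5: G.Adj v2 w3)
    (he6: G.Adj w1 w2)
    (he7: G.Adj w2 w3)
    (hdv1 : G.degree v1 = 5)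
    (hdv2 : G.degree v2 = 5)
    (hdw1 : G.degree w1 = 7)
    (hdw2 : G.degree w2 = 6)
    (hdw3 : G.degree w3 = 6)
    (S : Set V) (hS : S = {v1, v2, w1, w2, w3})
    (hrec : ∃ (m : ℕ) (φ : Fin (m + 1) → ↥(Sᶜ) → ℕ),
      IsRecolSeq (G.induce Sᶜ) (fun u => L u.1) φ (fun u => α u.1) (fun u => β u.1) ∧
      ∀ u : ↥(Sᶜ), recolorCount φ u ≤ k) :
    ∃ (M : ℕ) (ψ : Fin (M + 1) → V → ℕ),
      IsRecolSeq G L ψ α β ∧ ∀ u : V, recolorCount ψ u ≤ k := by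
  classical
  simp only [List.nodup_cons, List.mem_cons, List.not_mem_nil, not_or, or_false,
    List.nodup_nil, and_true, not_false_eq_true] at hnodup
  obtain ⟨⟨n12, n13, n14, n15⟩, ⟨n23, n24, n25⟩, ⟨n34, n35⟩, n45⟩ := hnodup
  obtain ⟨m, φ, hφ, hcnt⟩ := hrec
  have okα : ∀ B, Recol.Ok G L B α := fun B => ⟨fun v _ => hα.1 v, fun u _ w _ a => hα.2 a⟩
  have okβ : ∀ B, Recol.Ok G L B β := fun B => ⟨fun v _ => hβ.1 v, fun u _ w _ a => hβ.2 a⟩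
  set A : Finset V := Finset.univ \ {v1, v2, w1, w2, w3} with hAdef
  have hA : ∀ v, v ∈ A ↔ v ∈ Sᶜ := by
    intro v; subst hS; simp [hAdef]
  obtain ⟨σ, hval, hrun, hc⟩ := Recol.of_seq hA m α β φ hφ
  have hσk : ∀ u, Recol.cnt σ u ≤ k := by
    intro u
    by_cases hu : u ∈ A
    · have := hc ⟨u, (hA u).1 hu⟩
      rw [this]; exact hcnt _
    · rw [Recol.cnt_zero hval hu]; omega
  -- add w1
  have hw1A : w1 ∉ A := by simp [hAdef]
  have D1 : ({v1, v2, w2} : Finset V) ⊆ G.neighborFinset w1 := by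
    intro u; simp only [Finset.mem_insert, Finset.mem_singleton, SimpleGraph.mem_neighborFinset]
    rintro (rfl | rfl | rfl)
    exacts [he2.symm, he3.symm, he6]
  have C1 : ({v1, v2, w2} : Finset V).card = 3 := Finset.card_eq_three.2 ⟨_, _, _, n12, n14, n24, rfl⟩
  have d1 := Recol.card_bound (A := A) _ D1 (by simp [hAdef])
  rw [hdw1, C1] at d1
  obtain ⟨σ1, hval1, hrun1, hcnt1, hb1⟩ := Recol.single hL hw1A d1 hval hrun (okα _) (okβ _)
  have e1 := Recol.ev_bound hσk _ D1
  rw [hdw1, C1, Finset.sum_eq_zero (fun u hu => Recol.cnt_zero hval (by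
    simp only [Finset.mem_insert, Finset.mem_singleton] at hu
    simp [hAdef]; tauto))] at e1
  have hσ1k : ∀ u, Recol.cnt σ1 u ≤ k := by
    intro u
    by_cases hu : u ∈ A
    · rw [hcnt1 u hu]; exact hσk u
    · by_cases hu1 : u = w1
      · subst hu1; omega
      · rw [Recol.cnt_zero hval1 (by simp [hu, hu1])]; omega
  -- add w2, w3
  have hw2A : w2 ∉ insert w1 A := by simp [hAdef, Ne.symm n34]
  have hw3A : w3 ∉ insert w1 A := by simp [hAdef, Ne.symm n35]
  have hv1A : v1 ∉ insert w1 A := by simp [hAdef, n13]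
  have hv2A : v2 ∉ insert w1 A := by simp [hAdef, n23]
  have D2 : ({v2, w3} : Finset V) ⊆ G.neighborFinset w2 := by
    intro u; simp only [Finset.mem_insert, Finset.mem_singleton, SimpleGraph.mem_neighborFinset]
    rintro (rfl | rfl)
    exacts [he4.symm, he7]
  have D2' : ({v2, w3, w1} : Finset V) ⊆ G.neighborFinset w2 := by
    intro u; simp only [Finset.mem_insert, Finset.mem_singleton, SimpleGraph.mem_neighborFinset]
    rintro (rfl | rfl | rfl)
    exacts [he4.symm, he7, he6.symm]
  have D3 : ({v2, w2} : Finset V) ⊆ G.neighborFinset w3 := by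
    intro u; simp only [Finset.mem_insert, Finset.mem_singleton, SimpleGraph.mem_neighborFinset]
    rintro (rfl | rfl)
    exacts [he5.symm, he7.symm]
  have C2' : ({v2, w3, w1} : Finset V).card = 3 :=
    Finset.card_eq_three.2 ⟨_, _, _, n25, n23, Ne.symm n35, rfl⟩
  have d2 := Recol.card_bound (A := insert w1 A) _ D2 (by
    simp only [Finset.mem_insert, Finset.mem_singleton]
    rintro u (rfl | rfl)
    exacts [by simpa using hv2A, by simpa using hw3A])
  have d3 := Recol.card_bound (A := insert w1 A) _ D3 (by
    simp only [Finset.mem_insert, Finset.mem_singleton]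
    rintro u (rfl | rfl)
    exacts [by simpa using hv2A, by simpa using hw2A])
  rw [hdw2, Finset.card_pair n25] at d2
  rw [hdw3, Finset.card_pair n24] at d3
  obtain ⟨σ2, hval2, hrun2, hcnt2, hb2, hb3⟩ := Recol.pair hL hw2A hw3A he7 d2 d3 6 hval1 hrun1
    (okα _) (okβ _)
  have e2 := Recol.ev_bound hσ1k _ D2'
  have e3 := Recol.ev_bound hσ1k _ D3
  rw [hdw2, C2', Finset.sum_insert (by simp [n25, n23]), Finset.sum_pair (Ne.symm n35),
    Recol.cnt_zero hval1 hv2A, Recol.cnt_zero hval1 hw3A] at e2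
  rw [hdw3, Finset.card_pair n24, Finset.sum_pair n24,
    Recol.cnt_zero hval1 hv2A, Recol.cnt_zero hval1 hw2A] at e3
  have hσ2k : ∀ u, Recol.cnt σ2 u ≤ k := by
    intro u
    by_cases hu : u ∈ insert w1 A
    · rw [hcnt2 u hu]; exact hσ1k u
    · by_cases hu2 : u = w2
      · subst hu2; omega
      · by_cases hu3 : u = w3
        · subst hu3; omega
        · rw [Recol.cnt_zero hval2 (by simp only [Finset.mem_insert, not_or] at hu ⊢; tauto)]
          omega
  -- add v1, v2
  have hv1A' : v1 ∉ insert w2 (insert w3 (insert w1 A)) := by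
    rw [Finset.mem_insert, Finset.mem_insert]; tauto
  have hv2A' : v2 ∉ insert w2 (insert w3 (insert w1 A)) := by
    rw [Finset.mem_insert, Finset.mem_insert]; tauto
  have D4 : ({v2} : Finset V) ⊆ G.neighborFinset v1 := by simpa using he1
  have D4' : ({v2, w1} : Finset V) ⊆ G.neighborFinset v1 := by
    intro u; simp only [Finset.mem_insert, Finset.mem_singleton, SimpleGraph.mem_neighborFinset]
    rintro (rfl | rfl)
    exacts [he1, he2]
  have D5 : ({v1} : Finset V) ⊆ G.neighborFinset v2 := by simpa using he1.symm
  have D5' : ({v1, w1, w2, w3} : Finset V) ⊆ G.neighborFinset v2 := by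
    intro u; simp only [Finset.mem_insert, Finset.mem_singleton, SimpleGraph.mem_neighborFinset]
    rintro (rfl | rfl | rfl | rfl)
    exacts [he1.symm, he3, he4, he5]
  have C5' : ({v1, w1, w2, w3} : Finset V).card = 4 := by
    rw [Finset.card_insert_of_notMem (by simp [n13, n14, n15]),
      Finset.card_eq_three.2 ⟨_, _, _, n34, n35, n45, rfl⟩]
  have d4 := Recol.card_bound (A := insert w2 (insert w3 (insert w1 A))) _ D4 (by
    intro u hu; rw [Finset.mem_singleton.1 hu]; exact hv2A')
  have d5 := Recol.card_bound (A := insert w2 (insert w3 (insert w1 A))) _ D5 (by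
    intro u hu; rw [Finset.mem_singleton.1 hu]; exact hv1A')
  rw [hdv1, Finset.card_singleton] at d4
  rw [hdv2, Finset.card_singleton] at d5
  obtain ⟨σ3, hval3, hrun3, hcnt3, hb4, hb5⟩ := Recol.pair hL hv1A' hv2A' he1 d4 d5 0 hval2 hrun2
    (okα _) (okβ _)
  have e4 := Recol.ev_bound hσ2k _ D4'
  have e5 := Recol.ev_bound hσ2k _ D5'
  have q1 : Recol.cnt σ2 w1 = Recol.cnt σ1 w1 := hcnt2 w1 (by simp)
  have q3 := hσ2k w3
  rw [hdv1, Finset.card_pair n23, Finset.sum_pair n23, Recol.cnt_zero hval2 hv2A', q1] at e4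
  rw [hdv2, C5', Finset.sum_insert (by simp [n13, n14, n15]),
    Finset.sum_insert (by simp [n34, n35]), Finset.sum_pair n45,
    Recol.cnt_zero hval2 hv1A', q1] at e5
  have hσ3k : ∀ u, Recol.cnt σ3 u ≤ k := by
    intro u
    by_cases hu : u ∈ insert w2 (insert w3 (insert w1 A))
    · rw [hcnt3 u hu]; exact hσ2k u
    · by_cases hu2 : u = v1
      · subst hu2; omega
      · by_cases hu3 : u = v2
        · subst hu3; omega
        · rw [Recol.cnt_zero hval3 (by simp only [Finset.mem_insert, not_or] at hu ⊢; tauto)]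
          omega
  have huniv : insert v1 (insert v2 (insert w2 (insert w3 (insert w1 A)))) = Finset.univ := by
    ext u
    simp only [hAdef, Finset.mem_insert, Finset.mem_sdiff, Finset.mem_univ, Finset.mem_singleton,
      true_and, iff_true]
    by_contra h
    simp only [not_or] at h
    obtain ⟨a1, a2, a3, a4, a5, a6⟩ := h
    exact a6 ⟨a1, a2, a5, a3, a4⟩
  rw [huniv] at hval3 hrun3
  have hfin : Recol.run α σ3 = β := funext fun u => hrun3 u (Finset.mem_univ u)
  obtain ⟨M, ψ, hψ, hψk⟩ := Recol.to_seq σ3 α hval3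
  exact ⟨M, ψ, hfin ▸ hψ, fun u => (hψk u).trans (hσ3k u)⟩
end

section
/- Fix an integer k ≥ 416. Let G be a finite simple graph, L a 10-assignment for G, and α, β two L-colorings of G. Suppose G contains seven distinct vertices v1, v2, w1, w2, w3, w4, x with edges v1v2, v1w1, v1w2, v1w4, v2w2, v2w3, v2w4, v2x, w1w2, w2x, w3x, w3w4, with d_G(v1) = d_G(v2) = 5, d_G(w1) = d_G(w3) = 6, and d_G(w2) = d_G(w4) = d_G(x) = 7. Let S = {v1, v2, w1, w2, w3, w4, x}. If there exists a k-good recoloring sequence in G − S from the restriction of α to G − S to the restriction of β to G − S, then there exists a k-good recoloring sequence in G from α to β. -/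
set_option linter.unusedSectionVars false

namespace RecolAux

/-- Apply a list of moves to a coloring. -/
def fin {V : Type} [DecidableEq V] : (V → ℕ) → List (V × ℕ) → (V → ℕ)
  | φ, [] => φ
  | φ, m :: σ => fin (Function.update φ m.1 m.2) σ

/-- Number of moves at `v`. -/
def cnt {V : Type} [DecidableEq V] (v : V) : List (V × ℕ) → ℕ
  | [] => 0
  | m :: σ => (if m.1 = v then 1 else 0) + cnt v σ

/-- Target colors of the moves made at neighbors of `a`. -/
def ev {V : Type} (G : SimpleGraph V) [DecidableRel G.Adj] (a : V) : List (V × ℕ) → List ℕ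
  | [] => []
  | m :: σ => if G.Adj a m.1 then m.2 :: ev G a σ else ev G a σ

/-- A move list is valid on `U` from `φ`. -/
def Valid {V : Type} [DecidableEq V] (G : SimpleGraph V) (L : V → Finset ℕ) (U : Finset V) :
    (V → ℕ) → List (V × ℕ) → Prop
  | _, [] => True
  | φ, m :: σ => (m.1 ∈ U ∧ m.2 ∈ L m.1 ∧ φ m.1 ≠ m.2 ∧ ∀ u ∈ U, G.Adj m.1 u → φ u ≠ m.2) ∧
      Valid G L U (Function.update φ m.1 m.2) σ

/-- Proper list coloring on `U`. -/
def PropOn {V : Type} (G : SimpleGraph V) (L : V → Finset ℕ) (U : Finset V) (φ : V → ℕ) : Prop :=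
  ∀ u ∈ U, φ u ∈ L u ∧ ∀ w ∈ U, G.Adj u w → φ u ≠ φ w

section
variable {V : Type} [DecidableEq V] (G : SimpleGraph V) [DecidableRel G.Adj] (L : V → Finset ℕ)

theorem fin_congr (σ : List (V × ℕ)) : ∀ (φ ψ : V → ℕ) (v : V), φ v = ψ v →
    fin φ σ v = fin ψ σ v := by
  induction σ with
  | nil => intro φ ψ v h; exact h
  | cons m σ ih =>
    intro φ ψ v h
    apply ih
    simp only [Function.update_apply, h]

theorem fin_append (σ τ : List (V × ℕ)) : ∀ φ : V → ℕ, fin φ (σ ++ τ) = fin (fin φ σ) τ := by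
  induction σ with
  | nil => intro φ; rfl
  | cons m σ ih => intro φ; exact ih _

theorem cnt_append (v : V) (σ τ : List (V × ℕ)) : cnt v (σ ++ τ) = cnt v σ + cnt v τ := by
  induction σ with
  | nil => simp [cnt]
  | cons m σ ih => simp [cnt, ih]; omega

theorem ev_append (v : V) (σ τ : List (V × ℕ)) : ev G v (σ ++ τ) = ev G v σ ++ ev G v τ := by
  induction σ with
  | nil => simp [ev]
  | cons m σ ih => simp only [List.cons_append, ev, ih]; split <;> simp

theorem valid_congr (U : Finset V) (σ : List (V × ℕ)) : ∀ (φ ψ : V → ℕ), (∀ v ∈ U, φ v = ψ v) →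
    Valid G L U φ σ → Valid G L U ψ σ := by
  induction σ with
  | nil => intro φ ψ h _; trivial
  | cons m σ ih =>
    intro φ ψ h hv
    obtain ⟨⟨h1, h2, h3, h4⟩, h5⟩ := hv
    refine ⟨⟨h1, h2, by rw [← h _ h1]; exact h3, fun u hu ha => by rw [← h _ hu]; exact h4 u hu ha⟩, ?_⟩
    refine ih _ _ ?_ h5
    intro v hv
    simp only [Function.update_apply, h v hv]

theorem valid_append (U : Finset V) (σ τ : List (V × ℕ)) : ∀ φ : V → ℕ,
    Valid G L U φ (σ ++ τ) ↔ Valid G L U φ σ ∧ Valid G L U (fin φ σ) τ := by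
  induction σ with
  | nil => intro φ; simp [Valid, fin]
  | cons m σ ih =>
    intro φ
    simp only [List.cons_append, Valid, fin, ih, and_assoc]

theorem propOn_update (U : Finset V) (φ : V → ℕ) (v : V) (c : ℕ) (h : PropOn G L U φ)
    (hc : c ∈ L v) (hu : ∀ u ∈ U, G.Adj v u → φ u ≠ c) :
    PropOn G L U (Function.update φ v c) := by
  intro u huU
  obtain ⟨h1, h2⟩ := h u huU
  constructor
  · by_cases e : u = v
    · subst e; simpa using hc
    · simpa [e] using h1
  · intro w hw ha
    by_cases e : u = v
    · subst e
      have : w ≠ u := fun e => G.loopless.irrefl _ (e ▸ ha)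
      simp only [Function.update_self, Function.update_of_ne this]
      exact (hu w hw ha).symm
    · by_cases e' : w = v
      · subst e'
        simp only [Function.update_self, Function.update_of_ne e]
        exact hu u huU ha.symm
      · simp only [Function.update_of_ne e, Function.update_of_ne e']
        exact h2 w hw ha

theorem propOn_fin (U : Finset V) (σ : List (V × ℕ)) : ∀ φ : V → ℕ, PropOn G L U φ →
    Valid G L U φ σ → PropOn G L U (fin φ σ) := by
  induction σ with
  | nil => intro φ h _; exact h
  | cons m σ ih =>
    intro φ h hv
    exact ih _ (propOn_update G L U φ m.1 m.2 h hv.1.2.1 hv.1.2.2.2) hv.2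

theorem cnt_zero (U : Finset V) (v : V) (hv : v ∉ U) (σ : List (V × ℕ)) : ∀ φ : V → ℕ,
    Valid G L U φ σ → cnt v σ = 0 := by
  induction σ with
  | nil => intro φ _; rfl
  | cons m σ ih =>
    intro φ h
    have : m.1 ≠ v := fun e => hv (e ▸ h.1.1)
    simp [cnt, this, ih _ h.2]

theorem fin_not_mem (U : Finset V) (v : V) (hv : v ∉ U) (σ : List (V × ℕ)) : ∀ φ : V → ℕ,
    Valid G L U φ σ → fin φ σ v = φ v := by
  induction σ with
  | nil => intro φ _; rfl
  | cons m σ ih =>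
    intro φ h
    have : v ≠ m.1 := fun e => hv (e ▸ h.1.1)
    have h2 := ih _ h.2
    simp only [fin, h2, Function.update_of_ne this]

theorem ev_length [Fintype V] (U : Finset V) (a : V) (σ : List (V × ℕ)) : ∀ φ : V → ℕ,
    Valid G L U φ σ → (ev G a σ).length = ∑ u ∈ G.neighborFinset a ∩ U, cnt u σ := by
  induction σ with
  | nil => intro φ _; simp [ev, cnt]
  | cons m σ ih =>
    intro φ h
    have h2 := ih _ h.2
    simp only [ev, cnt, Finset.sum_add_distrib, ← h2]
    rw [Finset.sum_ite_eq]
    have := h.1.1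
    by_cases hm : G.Adj a m.1 <;> simp [hm, this]
    omega

theorem split_ev (a : V) : ∀ (σ : List (V × ℕ)) (n : ℕ), ∃ σ1 σ2, σ = σ1 ++ σ2 ∧
    (ev G a σ1).length ≤ n ∧ (ev G a σ2).length ≤ (ev G a σ).length - n := by
  intro σ
  induction σ with
  | nil => intro n; exact ⟨[], [], rfl, by simp [ev], by simp [ev]⟩
  | cons m σ ih =>
    intro n
    by_cases hm : G.Adj a m.1
    · cases n with
      | zero => exact ⟨[], m :: σ, rfl, by simp [ev], by simp⟩
      | succ n =>
        obtain ⟨s1, s2, e, h1, h2⟩ := ih n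
        refine ⟨m :: s1, s2, by simp [e], ?_, ?_⟩
        · simp [ev, hm, h1]
        · simp only [ev, hm, if_true, List.length_cons]; omega
    · obtain ⟨s1, s2, e, h1, h2⟩ := ih n
      refine ⟨m :: s1, s2, by simp [e], ?_, ?_⟩
      · simp [ev, hm, h1]
      · simpa only [ev, hm, if_false] using h2

/-- Main extension lemma: a clique `A` of new vertices is added; all new vertices avoid each other
and look ahead `p a` events in `U`. -/
theorem extend [Fintype V] (hL : ∀ u, (L u).card = 10) (U A : Finset V) (hUA : Disjoint U A)
    (hA : ∀ a ∈ A, ∀ b ∈ A, a ≠ b → G.Adj a b) (p : V → ℕ) (hp : ∀ a ∈ A, 1 ≤ p a)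
    (hd : ∀ a ∈ A, (G.neighborFinset a ∩ (U ∪ A)).card + p a ≤ 9)
    (σ : List (V × ℕ)) : ∀ (φ : V → ℕ) (j : V → ℕ), PropOn G L (U ∪ A) φ → Valid G L U φ σ →
    (∀ a ∈ A, φ a ∉ (ev G a σ).take (j a)) →
    ∃ σ', Valid G L (U ∪ A) φ σ' ∧ (∀ u ∈ U, fin φ σ' u = fin φ σ u) ∧
      (∀ v, v ∉ A → cnt v σ' = cnt v σ) ∧
      ∀ a ∈ A, p a * cnt a σ' ≤ ((ev G a σ).length - j a) + (p a - 1) := by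
  induction σ with
  | nil =>
    intro φ j _ _ _
    exact ⟨[], trivial, fun _ _ => rfl, fun _ _ => rfl, fun a _ => by simp [cnt]⟩
  | cons m σ ih =>
    have nohit : ∀ (φ : V → ℕ) (j : V → ℕ), PropOn G L (U ∪ A) φ → Valid G L U φ (m :: σ) →
        (∀ a ∈ A, φ a ∉ (ev G a (m :: σ)).take (j a)) →
        (∀ a ∈ A, G.Adj a m.1 → φ a ≠ m.2) →
        ∃ σ', Valid G L (U ∪ A) φ σ' ∧ (∀ u ∈ U, fin φ σ' u = fin φ (m :: σ) u) ∧
          (∀ v, v ∉ A → cnt v σ' = cnt v (m :: σ)) ∧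
          ∀ a ∈ A, p a * cnt a σ' ≤ ((ev G a (m :: σ)).length - j a) + (p a - 1) := by
      intro φ j hφ hv hj hno
      obtain ⟨⟨h1, h2, h3, h4⟩, h5⟩ := hv
      have hmove : ∀ u ∈ U ∪ A, G.Adj m.1 u → φ u ≠ m.2 := by
        intro u hu ha
        rcases Finset.mem_union.1 hu with hu | hu
        · exact h4 u hu ha
        · exact hno u hu ha.symm
      have hmA : ∀ a ∈ A, a ≠ m.1 := fun a ha e =>
        Finset.disjoint_left.1 hUA h1 (e ▸ ha)
      obtain ⟨τ, t1, t2, t3, t4⟩ := ih (Function.update φ m.1 m.2)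
        (fun a => if G.Adj a m.1 then j a - 1 else j a)
        (propOn_update G L _ φ m.1 m.2 hφ h2 hmove) h5 (by
          intro a ha
          have := hj a ha
          rw [Function.update_of_ne (hmA a ha)]
          by_cases hm : G.Adj a m.1
          · simp only [ev, hm, if_true] at this ⊢
            cases hja : j a with
            | zero => simp
            | succ n =>
              rw [hja] at this
              simp only [List.take_succ_cons, List.mem_cons, not_or] at this
              simpa using this.2
          · simpa only [ev, hm, if_false] using this)
      refine ⟨m :: τ, ⟨⟨Finset.mem_union_left _ h1, h2, h3, hmove⟩, t1⟩, t2, ?_, ?_⟩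
      · intro v hv
        simp [cnt, t3 v hv]
      · intro a ha
        have := t4 a ha
        simp only [cnt, (hmA a ha).symm, if_false, zero_add]
        by_cases hm : G.Adj a m.1
        · simp only [ev, hm, if_true, List.length_cons] at this ⊢
          omega
        · simpa only [ev, hm, if_false] using this
    intro φ j hφ hv hj
    by_cases hhit : ∃ a ∈ A, G.Adj a m.1 ∧ φ a = m.2
    · obtain ⟨a, ha, ham, hac⟩ := hhit
      have haU : a ∉ U := fun h => Finset.disjoint_left.1 hUA h ha
      obtain ⟨c, hcL, hc⟩ : ∃ c ∈ L a, c ∉ (G.neighborFinset a ∩ (U ∪ A)).image φ ∪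
          ((ev G a (m :: σ)).take (p a)).toFinset := by
        apply Finset.exists_mem_notMem_of_card_lt_card
        have e1 := Finset.card_union_le ((G.neighborFinset a ∩ (U ∪ A)).image φ)
          ((ev G a (m :: σ)).take (p a)).toFinset
        have e2 : ((G.neighborFinset a ∩ (U ∪ A)).image φ).card ≤ _ := Finset.card_image_le
        have e3 := List.toFinset_card_le ((ev G a (m :: σ)).take (p a))
        have e4 : ((ev G a (m :: σ)).take (p a)).length ≤ p a := by simp
        have e5 := hd a ha
        rw [hL]
        omega
      simp only [Finset.mem_union, not_or, Finset.mem_image, List.mem_toFinset, not_exists,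
        Finset.mem_inter, SimpleGraph.mem_neighborFinset, not_and] at hc
      obtain ⟨hc1, hc2⟩ := hc
      have hp1 := hp a ha
      have hcm : c ≠ m.2 := by
        intro e
        apply hc2
        obtain ⟨n, hn⟩ : ∃ n, p a = n + 1 := ⟨p a - 1, by omega⟩
        simp [ev, ham, hn, e]
      have hmove : ∀ u ∈ U ∪ A, G.Adj a u → φ u ≠ c := by
        intro u hu hau
        exact hc1 u ⟨hau, Finset.mem_union.1 hu⟩
      have hja : j a = 0 := by
        by_contra hne
        obtain ⟨n, hn⟩ : ∃ n, j a = n + 1 := ⟨j a - 1, by omega⟩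
        apply hj a ha
        simp [ev, ham, hn, hac]
      obtain ⟨τ, t1, t2, t3, t4⟩ := nohit (Function.update φ a c) (Function.update j a (p a))
        (propOn_update G L _ φ a c hφ hcL hmove)
        (valid_congr G L U _ φ _ (fun v hv => by
          rw [Function.update_of_ne]; exact fun e => haU (e ▸ hv)) hv)
        (by
          intro b hb
          by_cases e : b = a
          · subst e; simpa using hc2
          · simpa [e] using hj b hb)
        (by
          intro b hb hbm
          by_cases e : b = a
          · subst e; simpa using hcm
          · rw [Function.update_of_ne e]
            have := (hφ b (Finset.mem_union_right _ hb)).2 a (Finset.mem_union_right _ ha)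
              (hA b hb a ha e)
            rwa [hac] at this)
      refine ⟨(a, c) :: τ, ⟨⟨Finset.mem_union_right _ ha, hcL, by rw [hac]; exact hcm.symm,
        hmove⟩, t1⟩, ?_, ?_, ?_⟩
      · intro u hu
        have hua : u ≠ a := fun e => haU (e ▸ hu)
        have := t2 u hu
        simp only [fin] at this ⊢
        rw [this]
        apply fin_congr
        simp [Function.update_apply, hua]
      · intro v hv
        have hva : a ≠ v := fun e => hv (e ▸ ha)
        simp [cnt, hva] 
        simpa [cnt] using t3 v hv
      · intro b hb
        have := t4 b hb
        by_cases e : b = a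
        · subst e
          rw [Function.update_self] at this
          rw [hja]
          have hlen : 1 ≤ (ev G b (m :: σ)).length := by simp [ev, ham]
          simp only [cnt, if_true]
          rw [mul_add, mul_one]
          by_cases hlt : (ev G b (m :: σ)).length < p b
          · have h0 : cnt b τ = 0 := by
              by_contra hne
              have : p b * 1 ≤ p b * cnt b τ := Nat.mul_le_mul_left _ (by omega)
              omega
            rw [h0]; omega
          · omega
        · rw [Function.update_of_ne e] at this
          simpa [cnt, Ne.symm e] using this
    · push Not at hhit
      exact nohit φ j hφ hv hj hhit

theorem ev_bound [Fintype V] (U : Finset V) (a : V) (σ : List (V × ℕ)) (φ : V → ℕ)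
    (h : Valid G L U φ σ) (k : ℕ) (hk : ∀ v, cnt v σ ≤ k)
    (hc : (G.neighborFinset a ∩ U).card ≤ 4) : (ev G a σ).length ≤ 4 * k := by
  rw [ev_length G L U a σ φ h]
  calc _ ≤ (G.neighborFinset a ∩ U).card • k := Finset.sum_le_card_nsmul _ _ _ (fun v _ => hk v)
    _ ≤ 4 * k := by rw [smul_eq_mul]; exact Nat.mul_le_mul_right _ hc

theorem ev_bound' [Fintype V] (U : Finset V) (a x : V) (σ : List (V × ℕ)) (φ : V → ℕ)
    (h : Valid G L U φ σ) (k : ℕ) (hk : ∀ v, cnt v σ ≤ k)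
    (hc : (G.neighborFinset a ∩ U).card ≤ 4) (hx : G.Adj a x) (hxU : x ∈ U) :
    (ev G a σ).length ≤ 3 * k + cnt x σ := by
  rw [ev_length G L U a σ φ h]
  have hm : x ∈ G.neighborFinset a ∩ U := by simp [hx, hxU]
  rw [← Finset.sum_erase_add _ _ hm]
  have : ((G.neighborFinset a ∩ U).erase x).card ≤ 3 := by
    rw [Finset.card_erase_of_mem hm]; omega
  have h2 : ∑ u ∈ (G.neighborFinset a ∩ U).erase x, cnt u σ
      ≤ ((G.neighborFinset a ∩ U).erase x).card • k :=
    Finset.sum_le_card_nsmul _ _ _ (fun v _ => hk v)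
  rw [smul_eq_mul] at h2
  have := Nat.mul_le_mul_right k this
  omega

theorem card_inter_singleton_le [Fintype V] (U : Finset V) (a b : V) :
    (G.neighborFinset a ∩ (U ∪ {b})).card ≤ (G.neighborFinset a ∩ U).card + 1 := by
  rw [Finset.inter_union_distrib_left]
  refine (Finset.card_union_le _ _).trans ?_
  have : (G.neighborFinset a ∩ {b}).card ≤ ({b} : Finset V).card :=
    Finset.card_le_card Finset.inter_subset_right
  simp at this
  omega

theorem inter_self_eq [Fintype V] (U : Finset V) (a : V) :
    G.neighborFinset a ∩ (U ∪ {a}) = G.neighborFinset a ∩ U := by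
  ext v
  simp only [Finset.mem_inter, SimpleGraph.mem_neighborFinset, Finset.mem_union,
    Finset.mem_singleton]
  constructor
  · rintro ⟨h, h2 | rfl⟩
    · exact ⟨h, h2⟩
    · exact absurd h (G.loopless.irrefl _)
  · rintro ⟨h, h2⟩; exact ⟨h, Or.inl h2⟩

/-- Final moves for one vertex. -/
theorem finish_one (U : Finset V) (β : V → ℕ) (a : V) (hβ : PropOn G L (insert a U) β)
    (φ : V → ℕ) (hU : ∀ u ∈ U, u ≠ a → φ u = β u) :
    ∃ τ, Valid G L (insert a U) φ τ ∧ (∀ u ∈ insert a U, fin φ τ u = β u) ∧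
      (∀ v, v ≠ a → cnt v τ = 0) ∧ cnt a τ ≤ 1 := by
  by_cases e : φ a = β a
  · refine ⟨[], trivial, ?_, fun _ _ => rfl, by simp [cnt]⟩
    intro u hu
    by_cases hua : u = a
    · subst hua; exact e
    · exact hU u (Finset.mem_of_mem_insert_of_ne hu hua) hua
  · have ha := hβ a (Finset.mem_insert_self _ _)
    refine ⟨[(a, β a)], ⟨⟨Finset.mem_insert_self _ _, ha.1, e, ?_⟩, trivial⟩, ?_, ?_, ?_⟩
    · intro u hu hau
      have hua : u ≠ a := fun e => G.loopless.irrefl _ (e ▸ hau)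
      rw [hU u (Finset.mem_of_mem_insert_of_ne hu hua) hua]
      exact (ha.2 u hu hau).symm
    · intro u hu
      by_cases hua : u = a
      · subst hua; simp [fin]
      · simp [fin, hua]; exact hU u (Finset.mem_of_mem_insert_of_ne hu hua) hua
    · intro v hv; simp [cnt, Ne.symm hv]
    · simp [cnt]

/-- Final moves for a pair. -/
theorem finish_two [Fintype V] (hL : ∀ u, (L u).card = 10) (U : Finset V) (β : V → ℕ) (a b : V)
    (hab : a ≠ b) (haU : a ∈ U) (hbU : b ∈ U) (hβ : PropOn G L U β)
    (hb : (G.neighborFinset b ∩ U).card ≤ 5)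
    (φ : V → ℕ) (hU : ∀ u ∈ U, u ≠ a → u ≠ b → φ u = β u) :
    ∃ τ, Valid G L U φ τ ∧ (∀ u ∈ U, fin φ τ u = β u) ∧
      (∀ v, v ≠ a → v ≠ b → cnt v τ = 0) ∧ cnt a τ ≤ 1 ∧ cnt b τ ≤ 2 := by
  obtain ⟨c, hcL, hc⟩ : ∃ c ∈ L b, c ∉ insert (φ b) (insert (β a)
      ((G.neighborFinset b ∩ U).image φ)) := by
    apply Finset.exists_mem_notMem_of_card_lt_card
    have e1 := Finset.card_insert_le (φ b) (insert (β a) ((G.neighborFinset b ∩ U).image φ))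
    have e2 := Finset.card_insert_le (β a) ((G.neighborFinset b ∩ U).image φ)
    have e3 : ((G.neighborFinset b ∩ U).image φ).card ≤ _ := Finset.card_image_le
    rw [hL]
    omega
  simp only [Finset.mem_insert, not_or, Finset.mem_image, not_exists,
    Finset.mem_inter, SimpleGraph.mem_neighborFinset, not_and] at hc
  obtain ⟨hc1, hc2, hc3⟩ := hc
  have hβa := hβ a haU
  -- the first move of `b`
  have hfirst : Valid G L U φ [(b, c)] :=
    ⟨⟨hbU, hcL, fun e => hc1 e.symm, fun u hu hbu e => hc3 u ⟨hbu, hu⟩ e⟩, trivial⟩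
  have hinsb : insert b U = U := Finset.insert_eq_of_mem hbU
  by_cases hea : φ a = β a
  · obtain ⟨τ, t1, t2, t3, t4⟩ := finish_one G L U β b (by rwa [hinsb]) φ (fun u hu hub => by
      by_cases hua : u = a
      · subst hua; exact hea
      · exact hU u hu hua hub)
    rw [hinsb] at t1 t2
    exact ⟨τ, t1, t2, fun v _ hv => t3 v hv, by rw [t3 a hab]; omega, by omega⟩
  · -- move `b` away, then `a` to its target, then `b` to its target
    have hsecond : Valid G L U (Function.update φ b c) [(a, β a)] := by
      refine ⟨⟨haU, hβa.1, by rw [Function.update_of_ne hab]; exact hea, ?_⟩, trivial⟩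
      intro u hu hau
      by_cases hub : u = b
      · subst hub; simpa using hc2
      · have hua : u ≠ a := fun e => G.loopless.irrefl _ (e ▸ hau)
        simp only [Function.update_of_ne hub, hU u hu hua hub]
        exact (hβa.2 u hu hau).symm
    obtain ⟨τ, t1, t2, t3, t4⟩ := finish_one G L U β b (by rwa [hinsb])
      (Function.update (Function.update φ b c) a (β a)) (fun u hu hub => by
      by_cases hua : u = a
      · subst hua; simp
      · simp only [Function.update_of_ne hub, Function.update_of_ne hua]; exact hU u hu hua hub)
    rw [hinsb] at t1 t2
    refine ⟨(b, c) :: (a, β a) :: τ, ⟨hfirst.1, hsecond.1, t1⟩, t2, ?_, ?_, ?_⟩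
    · intro v hva hvb
      simp [cnt, Ne.symm hva, Ne.symm hvb, t3 v hvb]
    · simp [cnt, Ne.symm hab, t3 a hab]
    · simp [cnt, hab]; omega

/-- Invariant carried through the extension process. -/
def Good (α β : V → ℕ) (x : V) (k : ℕ) (U : Finset V) : Prop :=
  ∃ σ, Valid G L U α σ ∧ (∀ u ∈ U, fin α σ u = β u) ∧ (∀ v, cnt v σ ≤ k) ∧
    5 * cnt x σ ≤ 4 * k + 9

theorem good_one [Fintype V] (hL : ∀ u, (L u).card = 10) (α β : V → ℕ)
    (hα : ∀ U, PropOn G L U α) (hβ : ∀ U, PropOn G L U β) (x : V) (k : ℕ) (hk : 416 ≤ k)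
    (U : Finset V) (hx : x ∉ U) (hd : (G.neighborFinset x ∩ U).card ≤ 4)
    (σ : List (V × ℕ)) (h1 : Valid G L U α σ) (h2 : ∀ u ∈ U, fin α σ u = β u)
    (h3 : ∀ v, cnt v σ ≤ k) : Good G L α β x k (U ∪ {x}) := by
  obtain ⟨τ, t1, t2, t3, t4⟩ := extend G L hL U {x} (by simpa using hx)
    (by intro a ha b hb hne; simp at ha hb; exact absurd (ha.trans hb.symm) hne)
    (fun _ => 5) (by simp) (by
      intro a ha
      rw [Finset.mem_singleton] at ha
      subst ha
      rw [inter_self_eq]; omega) σ α (fun _ => 0) (hα _) h1 (by simp)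
  have hlen := ev_bound G L U x σ α h1 k h3 hd
  have hc := t4 x (by simp)
  have heq : U ∪ {x} = insert x U := by rw [Finset.union_comm]; rfl
  obtain ⟨τ', s1, s2, s3, s4⟩ := finish_one G L U β x (hβ _) (fin α τ) (fun u hu _ => by
    rw [t2 u hu, h2 u hu])
  have hcx : 5 * cnt x (τ ++ τ') ≤ 4 * k + 9 := by rw [cnt_append]; omega
  refine ⟨τ ++ τ', ?_, ?_, ?_, hcx⟩
  · rw [valid_append]
    exact ⟨t1, by rw [heq]; exact s1⟩
  · intro u hu
    rw [fin_append]
    exact s2 u (by rw [← heq]; exact hu)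
  · intro v
    by_cases hv : v = x
    · subst hv; omega
    · rw [cnt_append, s3 v hv, t3 v (by simpa using hv)]; simpa using h3 v

theorem good_two [Fintype V] (hL : ∀ u, (L u).card = 10) (α β : V → ℕ)
    (hα : ∀ U, PropOn G L U α) (hβ : ∀ U, PropOn G L U β) (x : V) (k : ℕ) (hk : 416 ≤ k)
    (U : Finset V) (a b : V) (hab : G.Adj a b) (ha : a ∉ U) (hb : b ∉ U)
    (hda : (G.neighborFinset a ∩ U).card ≤ 4) (hdb : (G.neighborFinset b ∩ U).card ≤ 4)
    (hxU : x ∈ U) (hbx : G.Adj b x)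
    (hg : Good G L α β x k U) : Good G L α β x k (U ∪ {a} ∪ {b}) := by
  obtain ⟨σ, h1, h2, h3, h4⟩ := hg
  have hne : a ≠ b := G.ne_of_adj hab
  have hla := ev_bound G L U a σ α h1 k h3 hda
  have hlb := ev_bound' G L U b x σ α h1 k h3 hdb hbx hxU
  obtain ⟨σ1, σ2, rfl, hs1, hs2⟩ := split_ev G a σ 20
  rw [valid_append] at h1
  obtain ⟨h1a, h1b⟩ := h1
  have hxa : x ≠ a := fun e => ha (e ▸ hxU)
  have hxb : x ≠ b := fun e => hb (e ▸ hxU)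
  -- prefix: `a` first
  obtain ⟨τ, t1, t2, t3, t4⟩ := extend G L hL U {a} (by simpa using ha)
    (by intro a ha b hb hne; simp at ha hb; exact absurd (ha.trans hb.symm) hne)
    (fun _ => 5) (by simp) (by
      intro c hc
      rw [Finset.mem_singleton] at hc
      subst hc
      rw [inter_self_eq]; omega) σ1 α (fun _ => 0) (hα _) h1a (by simp)
  -- prefix: then `b`
  obtain ⟨ρ, r1, r2, r3, r4⟩ := extend G L hL (U ∪ {a}) {b} (by
      rw [Finset.disjoint_singleton_right]; simp [hb, Ne.symm hne])
    (by intro a ha b hb hne; simp at ha hb; exact absurd (ha.trans hb.symm) hne)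
    (fun _ => 4) (by simp) (by
      intro c hc
      rw [Finset.mem_singleton] at hc
      subst hc
      rw [inter_self_eq]
      have := card_inter_singleton_le G U c a
      omega) τ α (fun _ => 0) (hα _) t1 (by simp)
  have hevτ : (ev G b τ).length = (ev G b σ1).length + cnt a τ := by
    rw [ev_length G L _ b τ α t1, ev_length G L _ b σ1 α h1a]
    have e : G.neighborFinset b ∩ (U ∪ {a}) = insert a (G.neighborFinset b ∩ U) := by
      ext v
      simp only [Finset.mem_inter, SimpleGraph.mem_neighborFinset, Finset.mem_union,
        Finset.mem_singleton, Finset.mem_insert]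
      constructor
      · rintro ⟨h, h2 | h2⟩
        · exact Or.inr ⟨h, h2⟩
        · exact Or.inl h2
      · rintro (rfl | ⟨h, h2⟩)
        · exact ⟨hab.symm, Or.inr rfl⟩
        · exact ⟨h, Or.inl h2⟩
    rw [e, Finset.sum_insert (by simp [ha]), add_comm]
    congr 1
    apply Finset.sum_congr rfl
    intro u hu
    apply t3
    simp only [Finset.mem_inter] at hu
    simp only [Finset.mem_singleton]
    exact fun e => ha (e ▸ hu.2)
  -- remainder: mutual
  have hψ : ∀ u ∈ U, fin α ρ u = fin α σ1 u := by
    intro u hu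
    rw [r2 u (Finset.mem_union_left _ hu), t2 u hu]
  have hW : U ∪ {a} ∪ {b} = U ∪ {a, b} := by rw [Finset.union_assoc]; rfl
  have hda' : (G.neighborFinset a ∩ (U ∪ {a} ∪ {b})).card ≤ 5 := by
    have := card_inter_singleton_le G (U ∪ {a}) a b
    rw [inter_self_eq] at this
    omega
  have hdb' : (G.neighborFinset b ∩ (U ∪ {a} ∪ {b})).card ≤ 5 := by
    rw [inter_self_eq]
    have := card_inter_singleton_le G U b a
    omega
  obtain ⟨μ, m1, m2, m3, m4⟩ := extend G L hL U {a, b} (by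
      rw [Finset.disjoint_right]; intro v hv; simp at hv; rcases hv with rfl | rfl <;> assumption)
    (by
      intro c hc d hd hcd
      simp at hc hd
      rcases hc with rfl | rfl <;> rcases hd with rfl | rfl
      · exact absurd rfl hcd
      · exact hab
      · exact hab.symm
      · exact absurd rfl hcd)
    (fun _ => 4) (by simp) (by
      intro c hc
      rw [← hW]
      simp at hc
      rcases hc with rfl | rfl <;> omega) σ2 (fin α ρ) (fun _ => 0)
    (by rw [← hW]; exact propOn_fin G L _ ρ α (hα _) r1)
    (valid_congr G L U σ2 _ _ (fun v hv => (hψ v hv).symm) h1b) (by simp)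
  rw [← hW] at m1
  have hend : ∀ u ∈ U, fin (fin α ρ) μ u = β u := by
    intro u hu
    rw [m2 u hu, fin_congr σ2 (fin α ρ) (fin α σ1) u (hψ u hu), ← fin_append]
    exact h2 u hu
  obtain ⟨ν, n1, n2, n3, n4, n5⟩ := finish_two G L hL (U ∪ {a} ∪ {b}) β a b hne (by simp)
    (by simp) (hβ _) hdb' (fin (fin α ρ) μ) (by
      intro u hu hua hub
      apply hend
      simpa [hua, hub] using hu)
  have hcnt : ∀ v, v ≠ a → v ≠ b → cnt v (ρ ++ (μ ++ ν)) = cnt v (σ1 ++ σ2) := by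
    intro v hva hvb
    rw [cnt_append, cnt_append, cnt_append, n3 v hva hvb, m3 v (by simp [hva, hvb]),
      r3 v (by simpa using hvb), t3 v (by simpa using hva)]
    omega
  refine ⟨ρ ++ (μ ++ ν), ?_, ?_, ?_, ?_⟩
  · rw [valid_append, valid_append]
    exact ⟨r1, m1, n1⟩
  · intro u hu
    rw [fin_append, fin_append]
    exact n2 u hu
  · intro v
    by_cases hva : v = a
    · subst hva
      have q1 := t4 v (by simp)
      have q2 := m4 v (by simp)
      rw [cnt_append, cnt_append, r3 v (by simpa using hne)]
      omega
    · by_cases hvb : v = b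
      · subst hvb
        have q0 := t4 a (by simp)
        have q1 := r4 v (by simp)
        have q2 := m4 v (by simp)
        rw [ev_append, List.length_append] at hlb
        rw [cnt_append, cnt_append]
        omega
      · rw [hcnt v hva hvb]; exact h3 v
  · rw [hcnt x hxa hxb]; exact h4

theorem card_le_of_missing [Fintype V] (U T : Finset V) (a : V) (d : ℕ)
    (hT : ∀ v ∈ T, G.Adj a v) (hTU : ∀ v ∈ T, v ∉ U) (hdeg : G.degree a = T.card + d) :
    (G.neighborFinset a ∩ U).card ≤ d := by
  have hsub : (G.neighborFinset a ∩ U) ∪ T ⊆ G.neighborFinset a := by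
    intro v hv
    rcases Finset.mem_union.1 hv with h | h
    · exact (Finset.mem_inter.1 h).1
    · simpa using hT v h
  have hdis : Disjoint (G.neighborFinset a ∩ U) T := by
    rw [Finset.disjoint_right]
    intro v hv h
    exact hTU v hv (Finset.mem_inter.1 h).2
  have := Finset.card_le_card hsub
  rw [Finset.card_union_of_disjoint hdis, SimpleGraph.card_neighborFinset_eq_degree] at this
  omega

/-- From indexed sequences to lists of moves. -/
theorem to_list (S : Set V) (U : Finset V) (hSU : ∀ v, v ∈ U ↔ v ∈ Sᶜ) : ∀ (m : ℕ)
    (φ : Fin (m + 1) → ↥(Sᶜ) → ℕ) (γ : V → ℕ), (∀ u : ↥(Sᶜ), φ 0 u = γ u.1) →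
    (∀ i, IsLColoring (G.induce Sᶜ) (fun u => L u.1) (φ i)) →
    (∀ i : Fin m, ∃! v : ↥(Sᶜ), φ i.castSucc v ≠ φ i.succ v) →
    ∃ σ, Valid G L U γ σ ∧ (∀ u : ↥(Sᶜ), fin γ σ u.1 = φ (Fin.last m) u) ∧
      ∀ u : ↥(Sᶜ), cnt u.1 σ = recolorCount φ u := by
  intro m
  induction m with
  | zero =>
    intro φ γ h0 _ _
    refine ⟨[], trivial, fun u => ?_, fun u => ?_⟩
    · exact (h0 u).symm
    · simp [cnt, recolorCount]
  | succ m ih =>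
    intro φ γ h0 hcol hstep
    obtain ⟨v, hv, huniq⟩ := hstep 0
    simp only [Fin.castSucc_zero] at hv huniq
    have hsame : ∀ u : ↥(Sᶜ), u ≠ v → φ (Fin.succ 0) u = φ 0 u := by
      intro u hu
      by_contra h
      exact hu (huniq u (fun e => h e.symm))
    obtain ⟨σ, s1, s2, s3⟩ := ih (fun i => φ i.succ) (Function.update γ v.1 (φ (Fin.succ 0) v))
      (by
        intro u
        by_cases e : u = v
        · subst e; simp
        · have : u.1 ≠ v.1 := fun h => e (Subtype.ext h)
          rw [Function.update_of_ne this, ← h0 u]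
          exact hsame u e)
      (fun i => hcol _)
      (fun i => by simpa using hstep i.succ)
    refine ⟨(v.1, φ (Fin.succ 0) v) :: σ, ⟨⟨(hSU _).2 v.2, (hcol _).1 v, ?_, ?_⟩, s1⟩, ?_, ?_⟩
    · simp only; rw [← h0 v]; exact hv
    · intro u hu hvu
      have huS := (hSU u).1 hu
      have hne : (⟨u, huS⟩ : ↥(Sᶜ)) ≠ v := fun e => by
        have : u = v.1 := congrArg Subtype.val e
        exact G.loopless.irrefl _ (this ▸ hvu)
      have e1 := h0 ⟨u, huS⟩
      simp only at e1 ⊢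
      rw [← e1, ← hsame _ hne]
      have hadj : (G.induce Sᶜ).Adj v ⟨u, huS⟩ := hvu
      exact ((hcol (Fin.succ 0)).2 hadj).symm
    · intro u
      rw [fin, s2 u, Fin.succ_last]
    · intro u
      have e3 := s3 u
      unfold recolorCount at e3 ⊢
      rw [Fin.card_filter_univ_succ, cnt, e3]
      simp only [Fin.castSucc_zero, Function.comp_def, ← Fin.succ_castSucc]
      by_cases e : u = v
      · subst e
        rw [if_pos rfl, if_pos hv]; omega
      · have : v.1 ≠ u.1 := fun h => e (Subtype.ext h.symm)
        rw [if_neg this, if_neg (by simpa using (hsame u e).symm)]; omega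

/-- From lists of moves to indexed sequences. -/
theorem of_list [Fintype V] (σ : List (V × ℕ)) : ∀ (γ : V → ℕ),
    PropOn G L Finset.univ γ → Valid G L Finset.univ γ σ →
    ∃ ψ : Fin (σ.length + 1) → V → ℕ, IsRecolSeq G L ψ γ (fin γ σ) ∧
      ∀ u, recolorCount ψ u = cnt u σ := by
  induction σ with
  | nil =>
    intro γ hγ _
    refine ⟨fun _ => γ, ⟨rfl, rfl, fun _ => ⟨fun v => (hγ v (Finset.mem_univ _)).1, fun u w h =>
      (hγ u (Finset.mem_univ _)).2 w (Finset.mem_univ _) h⟩, fun i => i.elim0⟩, fun u => ?_⟩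
    simp [recolorCount, cnt]
  | cons m σ ih =>
    intro γ hγ hv
    obtain ⟨ψ, ⟨p1, p2, p3, p4⟩, p5⟩ := ih (Function.update γ m.1 m.2)
      (propOn_update G L _ γ m.1 m.2 hγ hv.1.2.1 hv.1.2.2.2) hv.2
    have hγm := hv.1.2.2.1
    refine ⟨Fin.cons γ ψ, ⟨?_, ?_, ?_, ?_⟩, ?_⟩
    · simp
    · exact p2
    · intro i
      refine Fin.cases ?_ (fun i => ?_) i
      · exact ⟨fun v => (hγ v (Finset.mem_univ _)).1, fun u w h =>
          (hγ u (Finset.mem_univ _)).2 w (Finset.mem_univ _) h⟩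
      · rw [Fin.cons_succ]; exact p3 i
    · intro i
      refine Fin.cases ?_ (fun i => ?_) i
      · refine ⟨m.1, ?_, ?_⟩
        · simpa [p1] using hγm
        · intro y hy
          by_contra hne
          apply hy
          simp [p1, hne]
      · have := p4 i
        rw [← Fin.succ_castSucc]
        simpa only [Fin.cons_succ] using this
    · intro u
      have e3 := p5 u
      unfold recolorCount at e3 ⊢
      refine (Fin.card_filter_univ_succ _).trans ?_
      simp only [cnt, ← e3, Fin.castSucc_zero, Function.comp_def, ← Fin.succ_castSucc,
        Fin.cons_succ, Fin.cons_zero, p1]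
      by_cases e : m.1 = u
      · subst e
        simp [hγm]; omega
      · simp [e, Ne.symm e]

end

end RecolAux

open RecolAux

/-- configuration RC of Fig. more-reduc (e): if `G` contains this configuration and `G − S` has a
`k`-good recoloring sequence between the restrictions of `α` and `β` (`k ≥ 416`),
then `G` has a `k`-good recoloring sequence from `α` to `β`. -/
theorem stmt_15 {V : Type} [Fintype V] [DecidableEq V]
    (G : SimpleGraph V) [DecidableRel G.Adj]
    (k : ℕ) (hk : 416 ≤ k)
    (L : V → Finset ℕ) (hL : ∀ u, (L u).card = 10)
    (α β : V → ℕ) (hα : IsLColoring G L α) (hβ : IsLColoring G L β)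
    (v1 v2 w1 w2 w3 w4 x : V) (hnodup : ([v1, v2, w1, w2, w3, w4, x] : List V).Nodup)
    (he1: G.Adj v1 v2)
    (he2: G.Adj v1 w1)
    (he3: G.Adj v1 w2)
    (he4: G.Adj v1 w4)
    (he5: G.Adj v2 w2)
    (he6: G.Adj v2 w3)
    (he7: G.Adj v2 w4)
    (he8: G.Adj v2 x)
    (he9: G.Adj w1 w2)
    (he10: G.Adj w2 x)
    (he11: G.Adj w3 x)
    (he12: G.Adj w3 w4)
    (hdv1 : G.degree v1 = 5)
    (hdv2 : G.degree v2 = 5)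
    (hdw1 : G.degree w1 = 6)
    (hdw2 : G.degree w2 = 7)
    (hdw3 : G.degree w3 = 6)
    (hdw4 : G.degree w4 = 7)
    (hdx : G.degree x = 7)
    (S : Set V) (hS : S = {v1, v2, w1, w2, w3, w4, x})
    (hrec : ∃ (m : ℕ) (φ : Fin (m + 1) → ↥(Sᶜ) → ℕ),
      IsRecolSeq (G.induce Sᶜ) (fun u => L u.1) φ (fun u => α u.1) (fun u => β u.1) ∧
      ∀ u : ↥(Sᶜ), recolorCount φ u ≤ k) :
    ∃ (M : ℕ) (ψ : Fin (M + 1) → V → ℕ),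
      IsRecolSeq G L ψ α β ∧ ∀ u : V, recolorCount ψ u ≤ k := by
  simp only [List.nodup_cons, List.mem_cons, List.not_mem_nil, or_false, not_or] at hnodup
  obtain ⟨⟨n12, n13, n14, n15, n16, n17⟩, ⟨n23, n24, n25, n26, n27⟩, ⟨n34, n35, n36, n37⟩,
    ⟨n45, n46, n47⟩, ⟨n56, n57⟩, n67, -⟩ := hnodup
  have hαP : ∀ U, PropOn G L U α := fun U u _ => ⟨hα.1 u, fun w _ h => hα.2 h⟩
  have hβP : ∀ U, PropOn G L U β := fun U u _ => ⟨hβ.1 u, fun w _ h => hβ.2 h⟩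
  obtain ⟨m, φ, ⟨f1, f2, f3, f4⟩, f5⟩ := hrec
  set U : Finset V := Finset.univ \ {v1, v2, w1, w2, w3, w4, x} with hU
  have hSU : ∀ v, v ∈ U ↔ v ∈ Sᶜ := by
    intro v; subst hS; simp [hU]
  obtain ⟨σ, s1, s2, s3⟩ := to_list G L S U hSU m φ α (fun u => by rw [f1]) f3 f4
  have g0 : Good G L α β x k (U ∪ {x}) := by
    refine good_one G L hL α β hαP hβP x k hk U (by simp [hU]) ?_ σ s1 ?_ ?_
    · refine card_le_of_missing G U {v2, w2, w3} x 4 ?_ ?_ ?_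
      · simp [he8.symm, he10.symm, he11.symm]
      · simp [hU]
      · rw [hdx, Finset.card_eq_three.2 ⟨v2, w2, w3, n24, n25, n45, rfl⟩]
    · intro u hu
      have := s2 ⟨u, (hSU u).1 hu⟩
      rw [f2] at this
      exact this
    · intro v
      by_cases hv : v ∈ U
      · have := s3 ⟨v, (hSU v).1 hv⟩
        simp only at this
        rw [this]; exact f5 _
      · rw [cnt_zero G L U v hv σ α s1]; omega
  have g1 : Good G L α β x k (U ∪ {x} ∪ {w1} ∪ {w2}) := by
    refine good_two G L hL α β hαP hβP x k hk _ w1 w2 he9 ?_ ?_ ?_ ?_ ?_ he10 g0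
    · simp [hU, n37]
    · simp [hU, n47]
    · refine card_le_of_missing G _ {v1, w2} w1 4 ?_ ?_ ?_
      · simp [he2.symm, he9]
      · simp [hU, n17, n47]
      · rw [hdw1, Finset.card_pair n14]
    · refine card_le_of_missing G _ {v1, v2, w1} w2 4 ?_ ?_ ?_
      · simp [he3.symm, he5.symm, he9.symm]
      · simp [hU, n17, n27, n37]
      · rw [hdw2, Finset.card_eq_three.2 ⟨v1, v2, w1, n12, n13, n23, rfl⟩]
    · simp
  have g2 : Good G L α β x k (U ∪ {x} ∪ {w1} ∪ {w2} ∪ {w4} ∪ {w3}) := by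
    refine good_two G L hL α β hαP hβP x k hk _ w4 w3 he12.symm ?_ ?_ ?_ ?_ ?_ he11 g1
    · simp [hU, n67, Ne.symm n36, Ne.symm n46]
    · simp [hU, n57, Ne.symm n35, Ne.symm n45]
    · refine card_le_of_missing G _ {v1, v2, w3} w4 4 ?_ ?_ ?_
      · simp [he4.symm, he7.symm, he12.symm]
      · simp [hU, n17, n27, n57, n13, n14, n23, n24, Ne.symm n35, Ne.symm n45]
      · rw [hdw4, Finset.card_eq_three.2 ⟨v1, v2, w3, n12, n15, n25, rfl⟩]
    · refine card_le_of_missing G _ {v2, w4} w3 4 ?_ ?_ ?_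
      · simp [he6.symm, he12]
      · simp [hU, n27, n23, n24, n67, Ne.symm n36, Ne.symm n46]
      · rw [hdw3, Finset.card_pair n26]
    · simp
  have g3 : Good G L α β x k (U ∪ {x} ∪ {w1} ∪ {w2} ∪ {w4} ∪ {w3} ∪ {v1} ∪ {v2}) := by
    refine good_two G L hL α β hαP hβP x k hk _ v1 v2 he1 ?_ ?_ ?_ ?_ ?_ he8 g2
    · simp [hU, n17, n13, n14, n15, n16]
    · simp [hU, n27, n23, n24, n25, n26]
    · refine card_le_of_missing G _ {v2} v1 4 ?_ ?_ ?_
      · simp [he1]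
      · simp [hU, n27, n23, n24, n25, n26]
      · rw [hdv1, Finset.card_singleton]
    · refine card_le_of_missing G _ {v1} v2 4 ?_ ?_ ?_
      · simp [he1.symm]
      · simp [hU, n17, n13, n14, n15, n16]
      · rw [hdv2, Finset.card_singleton]
    · simp
  have huniv : U ∪ {x} ∪ {w1} ∪ {w2} ∪ {w4} ∪ {w3} ∪ {v1} ∪ {v2} = Finset.univ := by
    ext v
    simp only [hU, Finset.mem_union, Finset.mem_sdiff, Finset.mem_univ, Finset.mem_insert,
      Finset.mem_singleton, true_and, iff_true]
    tauto
  rw [huniv] at g3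
  obtain ⟨τ, t1, t2, t3, -⟩ := g3
  obtain ⟨ψ, q1, q2⟩ := of_list G L τ α (hαP _) t1
  have hfin : fin α τ = β := funext fun v => t2 v (Finset.mem_univ _)
  rw [hfin] at q1
  exact ⟨τ.length, ψ, q1, fun u => by rw [q2 u]; exact t3 u⟩
end
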